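/- Let N > 0 and set C = 10⁶(N+1). There is a natural number n > C³, depending only on N, with the following property. Let δ > 0 and κ ≥ δ, let G be a group acting by isometries and (κ,N)-acylindrically on a δ-hyperbolic geodesic metric space X, and let U ⊆ G be a finite symmetric subset with L(U) > 2·10³·κ such that the subgroup generated by U has unbounded orbits in X and is not virtually cyclic. Then there exist S ⊆ U^{10⁷·n} and p ∈ X such that: (1) S is 200δ-reduced at p; (2) |S| ≥ |U^n|/C²; (3) L(S,p) ≤ L(U^{10⁷·n},p) ≤ 10¹²·C³·L(U). In particular |S| > C and the natural homomorphism from the free group F(S) to G is injective, i.e. S freely generates a free subgroup of G. -/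

import Mathlib

/-!
The proof is a ping-pong argument with conjugates of a large power of a single loxodromic element.

Let `p` almost minimise the energy of `U` and let `L` be the energy of `U` at `p`, so `L` is huge
compared with `κ ≥ δ`. If all long elements of `U` moved `p` in one direction, moving `p` a little
in that direction would lower the energy; hence two of them leave `p` in different directions, and
some `g ∈ U²` has a quasi-axis through `p` with translation length between `L` and `2 * L`
(`HasAxis`, `exists_hasAxis`).

The elementary closure `E` of `g` (`elemClosure`) consists of the elements conjugating a positive
power of `g` to itself or its inverse. If a translate of the quasi-axis by `f` follows the
quasi-axis for long, then acylindricity and the pigeonhole principle applied to `g⁻ⁱ f g^{±i} f⁻¹`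
give `f ∈ E` (`rigidity`, `gromov_lt_of_notMem`). If `U ⊆ E`, then a single power `g ^ K` spans a
normal subgroup of `⟨U⟩` of finite index, again by acylindricity; as `⟨U⟩` is not virtually cyclic,
some `u ∈ U` is not in `E` (`exists_notMem_elemClosure`).

Put `c = g ^ (5 * n) * u` and consider `w_v = v c g ^ (1000 * n) c⁻¹ v⁻¹` for `v ∈ Uⁿ`. Because
`u ∉ E`, the point `c⁻¹ p` is far from the quasi-axis of `g`. An element commuting with a power of `g` that moves
such a point by little must almost fix the quasi-axis pointwise (`comm_almost_fixes`), so
acylindricity bounds by `2 * N` the number of `v ∈ Uⁿ` with `v c` in a given coset of `E`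
(`card_coset_le`). Choosing one `v` per coset gives at least `|Uⁿ| / (2 * N)` elements `w_v`, whose
quasi-axes pairwise diverge by rigidity, and these form a reduced set (`reduced_conjugates`,
`exists_reduced`). A reduced set generates a free group by the local-to-global principle for
Gromov products (`ReducedAt.word`, `ReducedAt.injective`). Finally `|Uⁿ| > n / 2 ≥ C³` since `Uⁿ`
contains `n / 2 + 1` distinct powers of `g`.
-/

open Pointwise Filter

noncomputable section

universe u v

/-- The Gromov product `(x,y)_t`. -/
def gromov {X : Type*} [MetricSpace X] (x y t : X) : ℝ :=
  (dist x t + dist y t - dist x y) / 2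

/-- `X` is `δ`-hyperbolic (four point inequality). -/
def IsDeltaHyperbolic (X : Type*) [MetricSpace X] (δ : ℝ) : Prop :=
  ∀ x y z t : X, min (gromov x y t) (gromov y z t) - δ ≤ gromov x z t

/-- `X` is a geodesic metric space: any two points are joined by an isometric
embedding of a closed real interval. -/
def IsGeodesicSpace (X : Type*) [MetricSpace X] : Prop :=
  ∀ x y : X, ∃ f : ℝ → X, f 0 = x ∧ f (dist x y) = y ∧
    ∀ s ∈ Set.Icc (0 : ℝ) (dist x y), ∀ t ∈ Set.Icc (0 : ℝ) (dist x y),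
      dist (f s) (f t) = |s - t|

/-- The action of `G` on `X` is by isometries. -/
def IsometricAction (G X : Type*) [Group G] [MetricSpace X] [MulAction G X] : Prop :=
  ∀ g : G, Isometry fun x : X => g • x

/-- The action of `G` on `X` is `(κ,N)`-acylindrical (relative to the
hyperbolicity constant `δ`). -/
def AcylindricalAction (G X : Type*) [Group G] [MetricSpace X] [MulAction G X]
    (δ κ N : ℝ) : Prop :=
  ∀ x y : X, κ ≤ dist x y →
    {g : G | dist (g • x) x ≤ 100 * δ ∧ dist (g • y) y ≤ 100 * δ}.Finite ∧
    ({g : G | dist (g • x) x ≤ 100 * δ ∧ dist (g • y) y ≤ 100 * δ}.ncard : ℝ) ≤ N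

/-- `L(U,x)`, the `ℓ^∞`-energy of `U` at `x`. -/
def energyAt {G X : Type*} [Group G] [MetricSpace X] [MulAction G X]
    (U : Set G) (x : X) : ℝ :=
  sSup ((fun u : G => dist (u • x) x) '' U)

/-- `L(U)`, the `ℓ^∞`-energy of `U`. -/
def energy {G : Type*} (X : Type*) [Group G] [MetricSpace X] [MulAction G X]
    (U : Set G) : ℝ :=
  sInf (Set.range fun x : X => energyAt U x)

/-- The stable translation length `‖g‖^∞`, computed at the point `x` (for an
isometric action, by Fekete's subadditive lemma this infimum equals the limit of
`d(gⁿx,x)/n` and is independent of `x`). -/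
def stableLength {G X : Type*} [Group G] [MetricSpace X] [MulAction G X]
    (g : G) (x : X) : ℝ :=
  ⨅ n : ℕ+, dist ((g ^ (n : ℕ)) • x) x / ((n : ℕ) : ℝ)

/-- `g` is loxodromic for the action on `X`. -/
def IsLoxodromic {G : Type*} (X : Type*) [Group G] [MetricSpace X] [MulAction G X]
    (g : G) : Prop :=
  ∀ x : X, 0 < stableLength g x

/-- The translation length `‖g‖`. -/
def translationLength {G : Type*} (X : Type*) [Group G] [MetricSpace X] [MulAction G X]
    (g : G) : ℝ :=
  sInf (Set.range fun x : X => dist (g • x) x)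

/-- The axis of `g`. -/
def axisOf {G X : Type*} [Group G] [MetricSpace X] [MulAction G X]
    (δ : ℝ) (g : G) : Set X :=
  {x : X | dist (g • x) x ≤ translationLength X g + 8 * δ}

/-- The exponential growth rate `ω(U) = limsup (1/n) log |Uⁿ|`. -/
def growthRate {G : Type*} [Group G] (U : Set G) : ℝ :=
  limsup (fun n : ℕ => Real.log ((U ^ n).ncard : ℝ) / (n : ℝ)) atTop

/-- `S` is `α`-reduced at `p`. -/
def ReducedAt {G X : Type*} [Group G] [MetricSpace X] [MulAction G X]
    (δ α : ℝ) (S : Set G) (p : X) : Prop :=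
  S ∩ S⁻¹ = ∅ ∧
  ∀ u₁ ∈ S ∪ S⁻¹, ∀ u₂ ∈ S ∪ S⁻¹, u₁ ≠ u₂ →
    gromov (u₁ • p) (u₂ • p) p <
      min (dist (u₁ • p) p) (dist (u₂ • p) p) / 2 - α - 50 * δ

/-- A group is virtually cyclic if it has a cyclic subgroup of finite index. -/
def VirtuallyCyclic (H : Type*) [Group H] : Prop :=
  ∃ K : Subgroup H, IsCyclic K ∧ K.FiniteIndex

/-- A group is virtually nilpotent if it has a nilpotent subgroup of finite index. -/
def VirtuallyNilpotent (H : Type*) [Group H] : Prop :=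
  ∃ K : Subgroup H, Group.IsNilpotent K ∧ K.FiniteIndex

/-- An `L`-local `(1,δ)`-quasi-geodesic line. -/
def IsLocalQuasiGeodesic {X : Type*} [MetricSpace X] (L δ : ℝ) (γ : ℝ → X) : Prop :=
  ∀ s t : ℝ, |s - t| ≤ L → dist (γ s) (γ t) ≤ |s - t| ∧ |s - t| ≤ dist (γ s) (γ t) + δ

/-- `Y` is `σ`-quasi-convex. -/
def SigmaQuasiConvex {X : Type*} [MetricSpace X] (σ : ℝ) (Y : Set X) : Prop :=
  ∀ x : X, ∀ y ∈ Y, ∀ y' ∈ Y, Metric.infDist x Y ≤ gromov y y' x + σ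

/-- `y` is a `δ`-projection of `x` on `Y`. -/
def IsDProj {X : Type*} [MetricSpace X] (δ : ℝ) (Y : Set X) (x y : X) : Prop :=
  y ∈ Y ∧ dist x y ≤ Metric.infDist x Y + δ

/-- `l` is a reduced word over `U ∪ U⁻¹`. -/
def IsWordOver {G : Type*} [Group G] (U : Set G) (l : List G) : Prop :=
  (∀ a ∈ l, a ∈ U ∪ U⁻¹) ∧ l.Chain' fun a b => b ≠ a⁻¹

/-- `l` is a `τ`-shortening word over `Y` (relative to `U` and `p`). -/
def IsShorteningWord {G X : Type*} [Group G] [MetricSpace X] [MulAction G X]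
    (δ τ : ℝ) (U : Set G) (p : X) (Y : Set X) (l : List G) : Prop :=
  l ≠ [] ∧ IsWordOver U l ∧
  ∃ y₀ y₁ : X, IsDProj δ Y p y₀ ∧ IsDProj δ Y (l.prod • p) y₁ ∧
    τ < dist y₀ y₁ ∧
    (∀ a ∈ l.head?, dist p y₀ ≤ dist (a • p) p / 2 - 200 * δ) ∧
    (∀ a ∈ l.getLast?, dist (l.prod • p) y₁ ≤ dist (a • p) p / 2 - 200 * δ)

/-- `l` is a `τ`-shortening-free word relative to the family `Ys`. -/
def ShorteningFreeWord {G X : Type*} [Group G] [MetricSpace X] [MulAction G X]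
    (δ τ : ℝ) (U : Set G) (p : X) (Ys : Set (Set X)) (l : List G) : Prop :=
  IsWordOver U l ∧
  ∀ Y ∈ Ys, ∀ l₀ l₁ l₂ : List G, l = l₀ ++ l₁ ++ l₂ → ¬ IsShorteningWord δ τ U p Y l₁

/-- The word length of an element of a free group. -/
def fgNorm {α : Type*} (w : FreeGroup α) : ℕ :=
  letI := Classical.decEq α
  w.toWord.length

/-- `w` is a prefix of `r` in the free group. -/
def FGPrefix {α : Type*} (w r : FreeGroup α) : Prop :=
  fgNorm r = fgNorm w + fgNorm (w⁻¹ * r)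

/-- `r'` is a cyclic permutation of `r`. -/
def IsCyclicPerm {α : Type*} (r r' : FreeGroup α) : Prop :=
  ∃ w v : FreeGroup α, r = w * v ∧ fgNorm r = fgNorm w + fgNorm v ∧
    r' = v * w ∧ fgNorm r' = fgNorm v + fgNorm w

/-- `q` is a piece of the set of relators `R`. -/
def IsPiece {α : Type*} (R : Set (FreeGroup α)) (q : FreeGroup α) : Prop :=
  q ≠ 1 ∧ ∃ r₁ ∈ R, ∃ r₂ ∈ R, r₁ ≠ r₂ ∧ FGPrefix q r₁ ∧ FGPrefix q r₂

/-- `ξ`-uniform uniform exponential growth: every finitely generated subgroup is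
either virtually nilpotent or has `ξ`-uniform exponential growth. -/
def UUEG (ξ : ℝ) (Q : Type*) [Group Q] : Prop :=
  ∀ H : Subgroup Q, H.FG →
    (VirtuallyNilpotent H ∨
      ∀ U : Set H, U.Finite → U⁻¹ = U → Subgroup.closure U = ⊤ → ξ < growthRate U)

/-! ### Gromov products and the four point inequality -/

section Basic

variable {G : Type u} {X : Type v} [Group G] [MetricSpace X] [MulAction G X] {δ : ℝ}

lemma gromov_comm (x y t : X) : gromov x y t = gromov y x t := by
  unfold gromov; rw [dist_comm x y]; ring

lemma gromov_nonneg (x y t : X) : 0 ≤ gromov x y t := by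
  unfold gromov
  have := dist_triangle x t y
  rw [dist_comm t y] at this
  linarith

lemma gromov_le_left (x y t : X) : gromov x y t ≤ dist x t := by
  unfold gromov
  have := dist_triangle y x t
  rw [dist_comm y x] at this
  linarith

lemma gromov_le_right (x y t : X) : gromov x y t ≤ dist y t := by
  rw [gromov_comm]; exact gromov_le_left y x t

lemma sub_le_gromov (x y t : X) : dist x t - dist x y ≤ gromov x y t := by
  unfold gromov
  have := dist_triangle x y t
  linarith

lemma gromov_le_base (x y t t' : X) : gromov x y t ≤ gromov x y t' + dist t t' := by
  unfold gromov
  have h1 := dist_triangle x t' t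
  have h2 := dist_triangle y t' t
  rw [dist_comm t' t] at h1 h2
  linarith

lemma gromov_le_move_left (x x' y t : X) : gromov x y t ≤ gromov x' y t + dist x x' := by
  unfold gromov
  have h1 := dist_triangle x x' t
  have h2 := dist_triangle x' x y
  rw [dist_comm x' x] at h2
  linarith

lemma gromov_le_move_right (x y y' t : X) : gromov x y t ≤ gromov x y' t + dist y y' := by
  rw [gromov_comm x y, gromov_comm x y']; exact gromov_le_move_left y y' x t

lemma gromov_smul (hiso : IsometricAction G X) (g : G) (x y t : X) :
    gromov (g • x) (g • y) (g • t) = gromov x y t := by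
  unfold gromov
  simp only [(hiso g).dist_eq]

lemma dist_smul_iso (hiso : IsometricAction G X) (g : G) (x y : X) :
    dist (g • x) (g • y) = dist x y := (hiso g).dist_eq x y

lemma dist_inv_smul (hiso : IsometricAction G X) (g : G) (x y : X) :
    dist (g⁻¹ • x) y = dist x (g • y) := by
  rw [← dist_smul_iso hiso g (g⁻¹ • x) y, smul_inv_smul]

lemma dist_inv_smul_self (hiso : IsometricAction G X) (g : G) (x : X) :
    dist (g⁻¹ • x) x = dist (g • x) x := by
  rw [dist_inv_smul hiso, dist_comm]

lemma dist_mul_smul_le (hiso : IsometricAction G X) (g h : G) (x : X) :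
    dist ((g * h) • x) x ≤ dist (g • x) x + dist (h • x) x := by
  have := dist_triangle ((g * h) • x) (g • x) x
  rw [mul_smul, dist_smul_iso hiso] at this
  rw [mul_smul]; linarith

lemma four_point (hX : IsDeltaHyperbolic X δ) (x y z t : X) :
    dist x z + dist y t ≤ max (dist x y + dist z t) (dist y z + dist x t) + 2 * δ := by
  have h := hX x y z t
  unfold gromov at h
  rcases le_total (dist x y + dist z t) (dist y z + dist x t) with h' | h'
  · rw [max_eq_right h']
    rcases min_le_iff.1 (le_refl (min ((dist x t + dist y t - dist x y) / 2)
      ((dist y t + dist z t - dist y z) / 2))) with h2 | h2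
    · rw [min_eq_right (by linarith)] at h; linarith
    · rw [min_eq_right (by linarith)] at h; linarith
  · rw [max_eq_left h']
    rw [min_eq_left (by linarith)] at h; linarith

/-- If `y` is close to `x` as seen from `t`, then replacing `x` by `y` in a small Gromov product
costs at most `δ`. -/
lemma gromov_replace (hX : IsDeltaHyperbolic X δ) {x z t : X} (y : X) {a : ℝ}
    (h : gromov x z t ≤ a) (hxy : a + δ < gromov x y t) : gromov y z t ≤ a + δ := by
  have := hX x y z t
  rcases min_le_iff.1 (by linarith : min (gromov x y t) (gromov y z t) ≤ a + δ) with h2 | h2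
  · linarith
  · exact h2

lemma gromov_replace_right (hX : IsDeltaHyperbolic X δ) {x z t : X} (y : X) {a : ℝ}
    (h : gromov z x t ≤ a) (hxy : a + δ < gromov x y t) : gromov z y t ≤ a + δ := by
  rw [gromov_comm] at h ⊢; exact gromov_replace hX y h hxy

/-- Two points lying near a geodesic `[y, z]` at comparable distance from `z` are close. -/
lemma dist_le_of_near (hX : IsDeltaHyperbolic X δ) {x x' y z : X} {a e : ℝ}
    (h : gromov y z x ≤ a) (h' : gromov y z x' ≤ a) (he : |dist x z - dist x' z| ≤ e) :
    dist x x' ≤ 2 * a + e + 2 * δ := by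
  have h4 := four_point hX x y x' z
  have := abs_le.1 he
  unfold gromov at h h'
  rw [dist_comm y x, dist_comm z x] at h
  rw [dist_comm y x', dist_comm z x'] at h'
  rw [dist_comm y x'] at h4
  rcases max_cases (dist x y + dist x' z) (dist x' y + dist x z) with h5 | h5 <;> linarith

lemma pow_smul_dist_le (hiso : IsometricAction G X) (g : G) (x : X) (i : ℕ) :
    dist (g ^ i • x) x ≤ i * dist (g • x) x := by
  induction i with
  | zero => simp
  | succ i ih =>
    have := dist_mul_smul_le hiso (g ^ i) g x
    rw [pow_succ]; push_cast; linarith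

end Basic

/-! ### Powers of an element with a quasi-axis through `p` -/

section AxisSection

variable {G : Type u} {X : Type v} [Group G] [MetricSpace X] [MulAction G X] {δ L : ℝ}

/-- The orbit of `p` under `⟨g⟩` is a quasi-axis of `g`: the two half orbits leave `p` in
opposite directions up to `9δ`, and `g ^ i` moves `p` by between `i * L` and `2 * i * L`. -/
structure HasAxis (δ L : ℝ) (g : G) (p : X) : Prop where
  corner : ∀ i j : ℕ, gromov (g ^ i • p) (g⁻¹ ^ j • p) p ≤ 9 * δ
  lower : ∀ i : ℕ, i * L ≤ dist (g ^ i • p) p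
  upper : ∀ i : ℕ, dist (g ^ i • p) p ≤ 2 * i * L

lemma dist_inv_pow_smul (hiso : IsometricAction G X) (g : G) (p : X) (i : ℕ) :
    dist (g⁻¹ ^ i • p) p = dist (g ^ i • p) p := by
  rw [inv_pow, dist_inv_smul_self hiso]

lemma HasAxis.inv (hiso : IsometricAction G X) {g : G} {p : X} (h : HasAxis δ L g p) :
    HasAxis δ L g⁻¹ p where
  corner i j := by
    rw [gromov_comm, inv_inv]; exact h.corner j i
  lower i := by rw [dist_inv_pow_smul hiso]; exact h.lower i
  upper i := by rw [dist_inv_pow_smul hiso]; exact h.upper i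

lemma HasAxis.mid (hiso : IsometricAction G X) {g : G} {p : X} (h : HasAxis δ L g p)
    {a b : ℕ} (hab : a ≤ b) : gromov p (g ^ b • p) (g ^ a • p) ≤ 9 * δ := by
  have := h.corner (b - a) a
  rw [← gromov_smul hiso (g ^ a), smul_smul, smul_smul, ← pow_add, inv_pow, mul_inv_cancel,
    one_smul, Nat.add_sub_cancel' hab, gromov_comm] at this
  exact this

lemma gromov_add (x y t : X) : gromov x y t + gromov x t y = dist y t := by
  unfold gromov; rw [dist_comm t y]; ring

/-- The powers `g ^ j` with `j ≥ 1` all leave `p` in the direction of `g • p`. -/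
lemma gromov_pow_ge (hX : IsDeltaHyperbolic X δ) (hiso : IsometricAction G X) (hδ : 0 < δ)
    {g : G} {p : X} (hc : gromov (g • p) (g⁻¹ • p) p ≤ 7 * δ) (hl : 20 * δ ≤ dist (g • p) p)
    (j : ℕ) : dist (g • p) p - 8 * δ ≤ gromov (g ^ (j + 1) • p) (g • p) p ∧
      gromov (g ^ (j + 1) • p) (g⁻¹ • p) p ≤ 8 * δ := by
  have key : ∀ j : ℕ, dist (g • p) p - 8 * δ ≤ gromov (g ^ (j + 1) • p) (g • p) p →
      gromov (g ^ (j + 1) • p) (g⁻¹ • p) p ≤ 8 * δ := by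
    intro j hj
    have := gromov_replace hX (g ^ (j + 1) • p) hc (by rw [gromov_comm]; linarith)
    linarith
  induction j with
  | zero =>
    refine ⟨?_, key 0 ?_⟩ <;>
    · unfold gromov; simp; linarith
  | succ j ih =>
    have h1 : dist (g • p) p - 8 * δ ≤ gromov (g ^ (j + 1 + 1) • p) (g • p) p := by
      have h2 := gromov_add (g ^ (j + 1 + 1) • p) (g • p) p
      have h3 : gromov (g ^ (j + 1 + 1) • p) p (g • p) = gromov (g ^ (j + 1) • p) (g⁻¹ • p) p := by
        rw [← gromov_smul hiso g (g ^ (j + 1) • p), smul_smul, smul_inv_smul, ← pow_succ']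
      linarith [ih.2]
    exact ⟨h1, key _ h1⟩

lemma hasAxis_of_corner (hX : IsDeltaHyperbolic X δ) (hiso : IsometricAction G X) (hδ : 0 < δ)
    {g : G} {p : X} (hL : 2000 * δ ≤ L) (hc : gromov (g • p) (g⁻¹ • p) p ≤ 7 * δ)
    (hl : 2 * L - 28 * δ ≤ dist (g • p) p) (hu : dist (g • p) p ≤ 2 * L) : HasAxis δ L g p := by
  have hc' : gromov (g⁻¹ • p) (g⁻¹⁻¹ • p) p ≤ 7 * δ := by rw [inv_inv, gromov_comm]; exact hc
  have hinv := dist_inv_smul_self hiso g p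
  have hcor : ∀ i j : ℕ, gromov (g ^ i • p) (g⁻¹ ^ j • p) p ≤ 9 * δ := by
    intro i j
    rcases i with _ | i
    · have := gromov_le_left (g ^ 0 • p) (g⁻¹ ^ j • p) p
      simp at this; simp; linarith
    rcases j with _ | j
    · have := gromov_le_right (g ^ (i + 1) • p) (g⁻¹ ^ 0 • p) p
      simp only [pow_zero, one_smul, dist_self] at this ⊢; linarith
    have h1 := (gromov_pow_ge hX hiso hδ hc (by linarith) i).2
    have h2 := (gromov_pow_ge hX hiso hδ hc' (by linarith) j).1
    have := gromov_replace_right hX (g⁻¹ ^ (j + 1) • p) h1 (by rw [gromov_comm]; linarith)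
    linarith
  refine ⟨hcor, fun i => ?_, fun i => ?_⟩
  · induction i with
    | zero => simp
    | succ i ih =>
      have h1 := hcor i 1
      have h2 : dist (g ^ (i + 1) • p) p = dist (g ^ i • p) (g⁻¹ • p) := by
        rw [dist_comm _ (g⁻¹ • p), dist_inv_smul hiso, smul_smul, ← pow_succ', dist_comm]
      unfold gromov at h1
      rw [pow_one] at h1
      push_cast; linarith
  · have := pow_smul_dist_le hiso g p i
    have h2 : (i : ℝ) * dist (g • p) p ≤ i * (2 * L) := by gcongr
    linarith

end AxisSection

section Energy

variable {G : Type u} {X : Type v} [Group G] [MetricSpace X] [MulAction G X] {δ : ℝ}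

lemma dist_le_energyAt {U : Set G} (hU : U.Finite) (x : X) {u : G} (hu : u ∈ U) :
    dist (u • x) x ≤ energyAt U x :=
  le_csSup (hU.image _).bddAbove ⟨u, hu, rfl⟩

lemma exists_dist_eq_energyAt {U : Set G} (hU : U.Finite) (hne : U.Nonempty) (x : X) :
    ∃ u ∈ U, dist (u • x) x = energyAt U x := by
  have := (hne.image (fun u : G => dist (u • x) x)).csSup_mem (hU.image _)
  exact this

lemma energyAt_nonneg (U : Set G) (x : X) : 0 ≤ energyAt U x := by
  apply Real.sSup_nonneg
  rintro _ ⟨u, -, rfl⟩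
  exact dist_nonneg

lemma energy_le (U : Set G) (x : X) : energy X U ≤ energyAt U x :=
  csInf_le ⟨0, by rintro _ ⟨y, rfl⟩; exact energyAt_nonneg U y⟩ ⟨x, rfl⟩

/-- At an almost minimiser `p` of the energy, `U ^ 2` contains an element with a quasi-axis
through `p`. If every long element of `U` moved `p` in the same direction, then displacing `p` by
`4δ` in that direction would lower the energy. So two long elements of `U` leave `p` in different
directions, and the square of one of them or their product has a quasi-axis. -/
lemma exists_hasAxis (hX : IsDeltaHyperbolic X δ) (hgeo : IsGeodesicSpace X)
    (hiso : IsometricAction G X) (hδ : 0 < δ) {U : Set G} (hU : U.Finite) (hne : U.Nonempty)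
    (hsym : U⁻¹ = U) (p : X) (hp : energyAt U p ≤ energy X U + δ)
    (hL : 2000 * δ ≤ energyAt U p) :
    ∃ g ∈ U ^ 2, HasAxis δ (energyAt U p) g p := by
  have hinv : ∀ u ∈ U, u⁻¹ ∈ U := fun u hu => by rw [← hsym]; simpa using hu
  set L := energyAt U p with hLdef
  obtain ⟨u₀, hu₀, hu₀L⟩ := exists_dist_eq_energyAt hU hne p
  rw [← hLdef] at hu₀L
  have hle : ∀ u ∈ U, dist (u • p) p ≤ L := fun u hu => dist_le_energyAt hU p hu
  -- a long element of `U` leaving `p` in another direction than `u₀`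
  have hex : ∃ u ∈ U, L - 9 * δ ≤ dist (u • p) p ∧ gromov (u₀ • p) (u • p) p ≤ 4 * δ := by
    obtain ⟨f, hf0, hf1, hf⟩ := hgeo p (u₀ • p)
    rw [dist_comm, hu₀L] at hf1 hf
    set q := f (4 * δ) with hq
    have hqp : dist q p = 4 * δ := by
      have := hf (4 * δ) ⟨by linarith, by linarith⟩ 0 ⟨le_refl _, by linarith⟩
      rw [hf0, sub_zero, abs_of_pos (by linarith)] at this
      exact this
    have hqu : dist q (u₀ • p) = L - 4 * δ := by
      have := hf (4 * δ) ⟨by linarith, by linarith⟩ L ⟨by linarith, le_refl _⟩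
      rw [hf1, abs_of_nonpos (by linarith)] at this
      rw [this]; ring
    have hqg : gromov q (u₀ • p) p = 4 * δ := by
      unfold gromov; rw [hqp, hqu, hu₀L]; ring
    obtain ⟨u, hu, huL⟩ := exists_dist_eq_energyAt hU hne q
    have hEq := energy_le U q
    have huq : L - δ ≤ dist (u • q) q := by linarith
    have hup : dist (u • q) q ≤ dist (u • p) p + 8 * δ := by
      have h1 := dist_triangle4 (u • q) (u • p) p q
      rw [dist_smul_iso hiso, dist_comm p q] at h1
      linarith
    have huinv := dist_inv_smul_self hiso u p
    by_contra hcon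
    push Not at hcon
    have h1 := hcon u hu (by linarith)
    have h2 := hcon u⁻¹ (hinv u hu) (by linarith)
    have h3 := hX q (u₀ • p) (u • p) p
    have h4 := hX q (u₀ • p) (u⁻¹ • p) p
    rw [hqg, min_eq_left h1.le] at h3
    rw [hqg, min_eq_left h2.le] at h4
    unfold gromov at h3 h4
    have h5 : dist q (u⁻¹ • p) = dist (u • q) p := by
      rw [dist_comm, dist_inv_smul hiso, dist_comm]
    have h6 := four_point hX (u • q) p q (u • p)
    rw [dist_smul_iso hiso, dist_comm p (u • p), dist_comm p q] at h6
    have h7 := hle u hu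
    rcases max_cases (dist (u • q) p + dist q (u • p)) (dist q p + dist q p) with h8 | h8 <;>
      linarith
  obtain ⟨u, hu, hul, hug⟩ := hex
  have hsq : ∀ g ∈ U, L - 9 * δ ≤ dist (g • p) p → gromov (g • p) (g⁻¹ • p) p ≤ 5 * δ →
      ∃ g ∈ U ^ 2, HasAxis δ L g p := by
    intro g hg hgl hgg
    refine ⟨g * g, by rw [pow_two]; exact Set.mul_mem_mul hg hg, ?_⟩
    have hgi := dist_inv_smul_self hiso g p
    have hlen : dist ((g * g) • p) p = dist (g • p) (g⁻¹ • p) := by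
      rw [dist_comm _ (g⁻¹ • p), dist_inv_smul hiso, mul_smul, dist_comm]
    have hnear : ∀ g : G, gromov (g • p) (g⁻¹ • p) p ≤ 5 * δ →
        dist (g • p) p - 5 * δ ≤ gromov (g • p) ((g * g) • p) p := by
      intro g hgg
      have h2 := gromov_add ((g * g) • p) (g • p) p
      have h3 : gromov ((g * g) • p) p (g • p) = gromov (g • p) (g⁻¹ • p) p := by
        rw [← gromov_smul hiso g (g • p), smul_smul, smul_inv_smul]
      rw [gromov_comm (g • p)]; linarith
    have h1 := gromov_replace hX ((g * g) • p) hgg (by linarith [hnear g hgg])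
    have h2 := hnear g⁻¹ (by rw [inv_inv, gromov_comm]; exact hgg)
    have h3 := gromov_replace_right hX ((g⁻¹ * g⁻¹) • p) h1 (by linarith)
    apply hasAxis_of_corner hX hiso hδ (by linarith)
    · rw [mul_inv_rev]; linarith
    · rw [hlen]; unfold gromov at hgg; linarith
    · have := dist_mul_smul_le hiso g g p
      linarith [hle g hg]
  by_cases hA : gromov (u₀ • p) (u₀⁻¹ • p) p ≤ 5 * δ
  · exact hsq u₀ hu₀ (by linarith) hA
  by_cases hB : gromov (u • p) (u⁻¹ • p) p ≤ 5 * δ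
  · exact hsq u hu hul hB
  push Not at hA hB
  have h1 := gromov_replace hX (u₀⁻¹ • p) hug (by linarith)
  have h2 := gromov_replace_right hX (u⁻¹ • p) hug (by linarith)
  have hiu₀ := dist_inv_smul_self hiso u₀ p
  have hiu := dist_inv_smul_self hiso u p
  have hnear : ∀ a b : G, gromov (a⁻¹ • p) (b • p) p ≤ 5 * δ →
      dist (a • p) p - 5 * δ ≤ gromov (a • p) ((a * b) • p) p := by
    intro a b hab
    have h2 := gromov_add ((a * b) • p) (a • p) p
    have h3 : gromov ((a * b) • p) p (a • p) = gromov (a⁻¹ • p) (b • p) p := by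
      rw [← gromov_smul hiso a (a⁻¹ • p), smul_inv_smul, smul_smul, gromov_comm]
    rw [gromov_comm (a • p)]; linarith
  refine ⟨u₀ * u, by rw [pow_two]; exact Set.mul_mem_mul hu₀ hu, ?_⟩
  have h3 := hnear u₀ u (by linarith)
  have h4 := hnear u⁻¹ u₀⁻¹ (by rw [inv_inv, gromov_comm]; linarith)
  have h5 := gromov_replace hX ((u₀ * u) • p) h2 (by linarith)
  have h6 := gromov_replace_right hX ((u⁻¹ * u₀⁻¹) • p) h5 (by linarith)
  apply hasAxis_of_corner hX hiso hδ (by linarith)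
  · rw [mul_inv_rev]; linarith
  · have hlen : dist ((u₀ * u) • p) p = dist (u₀⁻¹ • p) (u • p) := by
      rw [dist_inv_smul hiso, mul_smul, dist_comm]
    rw [hlen]; unfold gromov at h1; linarith
  · have := dist_mul_smul_le hiso u₀ u p
    linarith [hle u hu]

end Energy

/-! ### Rigidity of long overlaps -/

section Rigidity

variable {G : Type u} {X : Type v} [Group G] [MetricSpace X] [MulAction G X] {δ κ N L : ℝ}

/-- If the quasi-axis of `g` and the `f`-translate of the quasi-axis of `h` fellow travel, and `h`
and `g` have equal displacements, then `g ^ i` and `f * h ^ i * f⁻¹` almost agree along the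
overlap. Here `F` and `H` bound the displacements of `f` and of `g ^ i`, and `s` is an index for
which `g ^ s • p` is well inside the overlap. -/
lemma dist_conj_pow_le (hX : IsDeltaHyperbolic X δ) (hiso : IsometricAction G X) (hδ : 0 < δ)
    {g h : G} {p : X} (hg : HasAxis δ L g p) (hh : HasAxis δ L h p)
    (hgh : ∀ i : ℕ, dist (h ^ i • p) p = dist (g ^ i • p) p) (f : G) {M₁ M₂ s i : ℕ} {T F H : ℝ}
    (hT : T ≤ gromov (g ^ M₁ • p) (f • h ^ M₂ • p) p)
    (hF : dist (f • p) p = F) (hH : dist (g ^ i • p) p ≤ H)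
    (hs1 : s + i ≤ M₁) (hs2 : i ≤ M₂)
    (ha : F + H + 20 * δ ≤ dist (g ^ s • p) p) (ha' : F + H + 20 * δ ≤ dist (g ^ (s + i) • p) p)
    (hb : dist (g ^ s • p) p + 2 * F + H + 20 * δ ≤ T)
    (hb' : dist (g ^ (s + i) • p) p + 2 * F + H + 20 * δ ≤ T) :
    dist ((f * h ^ i * f⁻¹) • g ^ s • p) (g ^ (s + i) • p) ≤ 100 * δ := by
  set Y := g ^ M₁ • p with hY
  set Y' := f • h ^ M₂ • p with hY'
  have hF0 : 0 ≤ F := by rw [← hF]; exact dist_nonneg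
  have hH0 : 0 ≤ H := le_trans dist_nonneg hH
  have hYT : T ≤ dist Y p := hT.trans (gromov_le_left _ _ _)
  have hYT' : T ≤ dist Y' p := hT.trans (gromov_le_right _ _ _)
  -- points of the orbit of `g` inside the overlap are near `[f p, Y']`
  have near : ∀ r : ℕ, r ≤ M₁ → F + 20 * δ ≤ dist (g ^ r • p) p →
      dist (g ^ r • p) p + 20 * δ ≤ T → gromov (f • p) Y' (g ^ r • p) ≤ 11 * δ := by
    intro r hr h1 h2
    have h3 := hg.mid hiso hr
    rw [← hY] at h3
    have h4 := sub_le_gromov p (f • p) (g ^ r • p)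
    rw [dist_comm p (f • p), dist_comm p] at h4
    have h5 := gromov_replace hX (f • p) h3 (by linarith)
    have h6 := gromov_le_base Y Y' p (g ^ r • p)
    rw [dist_comm p] at h6
    have h7 := gromov_replace_right hX Y' h5 (by linarith)
    linarith
  have n1 := near s (by omega) (by linarith) (by linarith)
  have n2 := near (s + i) hs1 (by linarith) (by linarith)
  set x := f⁻¹ • g ^ s • p with hx
  have hfx : f • x = g ^ s • p := by rw [hx, smul_inv_smul]
  have htx : (f * h ^ i * f⁻¹) • g ^ s • p = f • h ^ i • x := by
    rw [hx]; simp only [smul_smul, mul_assoc]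
  have n1' : gromov p (h ^ M₂ • p) x ≤ 11 * δ := by
    rw [← gromov_smul hiso f, hfx]; exact n1
  have hxp : dist x p = dist (g ^ s • p) (f • p) := by rw [← hfx, dist_smul_iso hiso]
  have hxp1 : dist (g ^ s • p) p - F ≤ dist x p := by
    have := dist_triangle (g ^ s • p) (f • p) p
    rw [hxp]; linarith
  have hxp2 : dist x p ≤ dist (g ^ s • p) p + F := by
    have := dist_triangle_right (g ^ s • p) (f • p) p
    rw [hxp]; linarith
  have hHi : dist (h ^ i • p) p ≤ H := by rw [hgh]; exact hH
  have hMY : dist (h ^ M₂ • p) p + F ≥ dist Y' p := by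
    have := dist_triangle Y' (f • p) p
    rw [hY', dist_smul_iso hiso] at this
    linarith
  have hMi : h ^ M₂ = h ^ i * h ^ (M₂ - i) := by rw [← pow_add, Nat.add_sub_cancel' hs2]
  have hMi' : h ^ M₂ = h ^ (M₂ - i) * h ^ i := by rw [← pow_add, Nat.sub_add_cancel hs2]
  have hMd : dist (h ^ (M₂ - i) • p) (h ^ M₂ • p) ≤ H := by
    rw [hMi', mul_smul, dist_smul_iso hiso, dist_comm]; exact hHi
  -- `h ^ i • x` is still near `[p, h ^ M₂ p]`
  have n3 : gromov p (h ^ M₂ • p) (h ^ i • x) ≤ 13 * δ := by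
    have e1 : gromov p (h ^ M₂ • p) (h ^ i • x)
        = gromov ((h ^ i)⁻¹ • p) (h ^ (M₂ - i) • p) x := by
      rw [← gromov_smul hiso (h ^ i) ((h ^ i)⁻¹ • p), smul_inv_smul, smul_smul (h ^ i) (h ^ (M₂ - i)) p, ← hMi]
    have e2 := sub_le_gromov p ((h ^ i)⁻¹ • p) x
    have e2' : dist p ((h ^ i)⁻¹ • p) ≤ H := by
      rw [dist_comm, dist_inv_smul_self hiso]; exact hHi
    rw [dist_comm p x] at e2
    have e3 := gromov_replace hX ((h ^ i)⁻¹ • p) n1' (by linarith)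
    have e4 := sub_le_gromov (h ^ M₂ • p) (h ^ (M₂ - i) • p) x
    rw [dist_comm (h ^ M₂ • p) (h ^ (M₂ - i) • p)] at e4
    have e5 := dist_triangle (h ^ M₂ • p) x p
    have e6 := gromov_replace_right hX (h ^ (M₂ - i) • p) e3 (by linarith)
    rw [e1]; linarith
  have n3' : gromov (f • p) Y' (f • h ^ i • x) ≤ 13 * δ := by
    rw [hY', gromov_smul hiso]; exact n3
  -- compare the distances of the two points to `Y'`
  have d1 : gromov x (h ^ M₂ • p) (h ^ (M₂ - i) • p) ≤ 10 * δ := by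
    have e1 := hh.mid hiso (Nat.sub_le M₂ i)
    have e2 := sub_le_gromov (h ^ (M₂ - i) • p) x p
    have e3 := sub_le_gromov p x (h ^ (M₂ - i) • p)
    have e4 := dist_triangle (h ^ M₂ • p) (h ^ (M₂ - i) • p) p
    rw [dist_comm (h ^ M₂ • p) (h ^ (M₂ - i) • p)] at e4
    rw [dist_comm p x, dist_comm p] at e3
    have := gromov_replace hX x e1 (by linarith)
    linarith
  have d2 : gromov (g ^ s • p) Y' (g ^ (s + i) • p) ≤ 10 * δ := by
    have e1 : gromov (g ^ s • p) Y (g ^ (s + i) • p) ≤ 9 * δ := by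
      have := hg.mid hiso (show i ≤ M₁ - s by omega)
      rw [← gromov_smul hiso (g ^ s), smul_smul, smul_smul, ← pow_add, ← pow_add,
        Nat.add_sub_cancel' (by omega : s ≤ M₁)] at this
      exact this
    have e2 := gromov_le_base Y Y' p (g ^ (s + i) • p)
    rw [dist_comm p] at e2
    have := gromov_replace_right hX Y' e1 (by linarith)
    linarith
  have q1 := gromov_nonneg x (h ^ M₂ • p) (h ^ (M₂ - i) • p)
  have q2 := gromov_nonneg (g ^ s • p) Y' (g ^ (s + i) • p)
  have f1 : dist (f • h ^ i • x) Y' = dist x (h ^ (M₂ - i) • p) := by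
    rw [hY', dist_smul_iso hiso, hMi, mul_smul, dist_smul_iso hiso]
  have f2 : dist (g ^ s • p) Y' = dist x (h ^ M₂ • p) := by
    rw [← hfx, hY', dist_smul_iso hiso]
  have f3 : dist (h ^ M₂ • p) (h ^ (M₂ - i) • p) = dist (g ^ i • p) p := by
    rw [hMi', mul_smul, dist_smul_iso hiso, hgh]
  have f4 : dist (g ^ s • p) (g ^ (s + i) • p) = dist (g ^ i • p) p := by
    rw [pow_add, mul_smul, dist_smul_iso hiso, dist_comm]
  unfold gromov at d1 d2 q1 q2
  rw [f3] at d1 q1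
  rw [f4, f2, dist_comm Y'] at d2 q2
  have := dist_le_of_near hX (e := 20 * δ) n3' (n2.trans (by linarith)) (by
    rw [f1, abs_le]; constructor <;> linarith)
  rw [htx]; linarith

/-- If the quasi-axis of `g` and the `f`-translate of the quasi-axis of `h` fellow travel for long
enough, then `f` conjugates a positive power of `h` to the same power of `g`: by acylindricity two
of the elements `g⁻ⁱ f hⁱ f⁻¹`, `0 ≤ i ≤ N`, coincide. -/
lemma rigidity (hX : IsDeltaHyperbolic X δ) (hiso : IsometricAction G X)
    (hacy : AcylindricalAction G X δ κ N) (hδ : 0 < δ) (hN : 0 < N) (hLδ : 2000 * δ ≤ L)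
    (hLκ : κ ≤ L) {g h : G} {p : X} (hg : HasAxis δ L g p) (hh : HasAxis δ L h p)
    (hgh : ∀ i : ℕ, dist (h ^ i • p) p = dist (g ^ i • p) p) (f : G) (M₁ M₂ : ℕ)
    (hT : 4 * dist (f • p) p + 10 * (N + 1) * L ≤ gromov (g ^ M₁ • p) (f • h ^ M₂ • p) p) :
    ∃ k : ℕ, 0 < k ∧ f * h ^ k * f⁻¹ = g ^ k := by
  set F := dist (f • p) p with hF
  have hF0 : 0 ≤ F := dist_nonneg
  have hL : 0 < L := by linarith
  set n := ⌊N⌋₊ with hn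
  have hnN : (n : ℝ) ≤ N := Nat.floor_le hN.le
  set s₀ := ⌈F / L + 2 * n⌉₊ + 1 with hs₀
  have hs1 : F / L + 2 * n + 1 ≤ s₀ := by
    rw [hs₀]; push_cast; linarith [Nat.le_ceil (F / L + 2 * n)]
  have hs2 : (s₀ : ℝ) ≤ F / L + 2 * n + 2 := by
    rw [hs₀]; push_cast
    have : 0 ≤ F / L + 2 * n := by positivity
    linarith [Nat.ceil_lt_add_one this]
  have hFL : F / L * L = F := by field_simp
  have hs1' : F + 2 * n * L + L ≤ s₀ * L := by
    have := mul_le_mul_of_nonneg_right hs1 hL.le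
    nlinarith
  have hs2' : s₀ * L ≤ F + 2 * n * L + 2 * L := by
    have := mul_le_mul_of_nonneg_right hs2 hL.le
    nlinarith
  have hnL : n * L ≤ N * L := mul_le_mul_of_nonneg_right hnN hL.le
  have hnL0 : 0 ≤ n * L := by positivity
  have hM₁ : 4 * F + 10 * (N + 1) * L ≤ 2 * M₁ * L :=
    hT.trans ((gromov_le_left _ _ _).trans (hg.upper M₁))
  have hM₂ : 4 * F + 10 * (N + 1) * L ≤ F + 2 * M₂ * L := by
    have h1 := hT.trans (gromov_le_right _ _ _)
    have h2 := dist_triangle (f • h ^ M₂ • p) (f • p) p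
    rw [dist_smul_iso hiso] at h2
    linarith [hh.upper M₂]
  have hn1 : s₀ + 1 + n ≤ M₁ := by
    have : ((s₀ + 1 + n : ℕ) : ℝ) * L ≤ M₁ * L := by push_cast; nlinarith
    exact_mod_cast le_of_mul_le_mul_right this hL
  have hn2 : n ≤ M₂ := by
    have : (n : ℝ) * L ≤ M₂ * L := by nlinarith
    exact_mod_cast le_of_mul_le_mul_right this hL
  have hlow : ∀ r : ℕ, s₀ ≤ r → F + 2 * n * L + 20 * δ ≤ dist (g ^ r • p) p := by
    intro r hr
    have h1 : (s₀ : ℝ) * L ≤ r * L := by gcongr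
    linarith [hg.lower r]
  have hupp : ∀ r : ℕ, r ≤ s₀ + 1 + n →
      dist (g ^ r • p) p + 2 * F + 2 * n * L + 20 * δ ≤ 4 * F + 10 * (N + 1) * L := by
    intro r hr
    have h1 : (r : ℝ) * L ≤ ((s₀ + 1 + n : ℕ) : ℝ) * L := by gcongr
    push_cast at h1
    linarith [hg.upper r]
  have hHi : ∀ i : ℕ, i ≤ n → dist (g ^ i • p) p ≤ 2 * n * L := by
    intro i hi
    have h1 : (i : ℝ) * L ≤ n * L := by gcongr
    linarith [hg.upper i]
  have main : ∀ s i : ℕ, s₀ ≤ s → s ≤ s₀ + 1 → i ≤ n →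
      dist (((g ^ i)⁻¹ * (f * h ^ i * f⁻¹)) • g ^ s • p) (g ^ s • p) ≤ 100 * δ := by
    intro s i h1 h2 h3
    have := dist_conj_pow_le hX hiso hδ hg hh hgh f hT hF.symm (hHi i h3) (s := s)
      (by omega) (by omega) (hlow s h1) (hlow (s + i) (by omega)) (hupp s (by omega))
      (hupp (s + i) (by omega))
    rw [mul_smul, dist_inv_smul hiso, smul_smul (g ^ i), ← pow_add, add_comm i s]
    exact this
  have hd : κ ≤ dist (g ^ s₀ • p) (g ^ (s₀ + 1) • p) := by
    rw [pow_succ g s₀, mul_smul, dist_smul_iso hiso, dist_comm]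
    have := hg.lower 1
    rw [pow_one] at this; push_cast at this; linarith
  obtain ⟨hfin, hcard⟩ := hacy _ _ hd
  set A := {a : G | dist (a • g ^ s₀ • p) (g ^ s₀ • p) ≤ 100 * δ ∧
    dist (a • g ^ (s₀ + 1) • p) (g ^ (s₀ + 1) • p) ≤ 100 * δ} with hA
  have hcard' : hfin.toFinset.card < (Finset.range (n + 1)).card := by
    rw [Finset.card_range, ← Set.ncard_eq_toFinset_card A hfin, Nat.lt_succ_iff]
    exact Nat.le_floor hcard
  obtain ⟨i, hi, j, hj, hij, heq⟩ := Finset.exists_ne_map_eq_of_card_lt_of_maps_to hcard'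
    (f := fun i => (g ^ i)⁻¹ * (f * h ^ i * f⁻¹)) (by
      intro i hi
      have hi' : i ≤ n := by
        have := Finset.mem_range.1 hi
        omega
      simp only [Set.Finite.coe_toFinset]
      exact ⟨main s₀ i le_rfl (by omega) hi', main (s₀ + 1) i (by omega) le_rfl hi'⟩)
  have cancel : ∀ i j : ℕ, i < j → (g ^ i)⁻¹ * (f * h ^ i * f⁻¹) = (g ^ j)⁻¹ * (f * h ^ j * f⁻¹) →
      ∃ k : ℕ, 0 < k ∧ f * h ^ k * f⁻¹ = g ^ k := by
    intro i j hlt he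
    refine ⟨j - i, by omega, ?_⟩
    obtain ⟨k, rfl⟩ := Nat.exists_eq_add_of_lt hlt
    have hk : i + k + 1 - i = k + 1 := by omega
    rw [hk]
    have e1 : g ^ (i + k + 1) = g ^ (k + 1) * g ^ i := by rw [← pow_add]; congr 1; omega
    have e2 : h ^ (i + k + 1) = h ^ (k + 1) * h ^ i := by rw [← pow_add]; congr 1; omega
    rw [e1, e2, mul_inv_rev, mul_assoc (g ^ i)⁻¹, mul_right_inj, eq_inv_mul_iff_mul_eq] at he
    have : g ^ (k + 1) * (f * h ^ i * f⁻¹) = (f * h ^ (k + 1) * f⁻¹) * (f * h ^ i * f⁻¹) := by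
      rw [he]; group
    exact (mul_right_cancel this).symm
  rcases lt_or_gt_of_ne hij with h1 | h1
  · exact cancel i j h1 heq
  · exact cancel j i h1 heq.symm

end Rigidity

/-! ### The elementary closure of an element with a quasi-axis -/

section Elementary

variable {G : Type u} {X : Type v} [Group G] [MetricSpace X] [MulAction G X] {δ κ N L : ℝ}

lemma conj_pow_mul {f g a : G} {k : ℕ} (h : f * g ^ k * f⁻¹ = a) (l : ℕ) :
    f * g ^ (k * l) * f⁻¹ = a ^ l := by
  rw [← h, conj_pow, pow_mul]

/-- The elements conjugating some positive power of `g` to itself or to its inverse. -/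
def elemClosure (g : G) : Subgroup G where
  carrier := {f | ∃ k : ℕ, 0 < k ∧ (f * g ^ k * f⁻¹ = g ^ k ∨ f * g ^ k * f⁻¹ = (g ^ k)⁻¹)}
  one_mem' := ⟨1, one_pos, Or.inl (by simp)⟩
  inv_mem' := by
    rintro f ⟨k, hk, h | h⟩
    · refine ⟨k, hk, Or.inl ?_⟩
      rw [inv_inv]; nth_rewrite 1 [← h]; group
    · refine ⟨k, hk, Or.inr ?_⟩
      have h' : g ^ k = (f * g ^ k * f⁻¹)⁻¹ := by rw [h, inv_inv]
      rw [inv_inv]; nth_rewrite 1 [h']; group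
  mul_mem' := by
    rintro f f' ⟨k, hk, h⟩ ⟨k', hk', h'⟩
    refine ⟨k * k', Nat.mul_pos hk hk', ?_⟩
    have e : ∀ a : G, f' * g ^ (k * k') * f'⁻¹ = a →
        f * f' * g ^ (k * k') * (f * f')⁻¹ = f * a * f⁻¹ := by
      rintro a rfl; group
    have e1 : f' * g ^ (k * k') * f'⁻¹ = g ^ (k * k') ∨
        f' * g ^ (k * k') * f'⁻¹ = (g ^ (k * k'))⁻¹ := by
      rw [mul_comm k k']
      rcases h' with h' | h'
      · left; rw [conj_pow_mul h', pow_mul]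
      · right; rw [conj_pow_mul h', pow_mul, inv_pow]
    have e2 : f * g ^ (k * k') * f⁻¹ = g ^ (k * k') ∨
        f * g ^ (k * k') * f⁻¹ = (g ^ (k * k'))⁻¹ := by
      rcases h with h | h
      · left; rw [conj_pow_mul h, pow_mul]
      · right; rw [conj_pow_mul h, pow_mul, inv_pow]
    have e3 : f * (g ^ (k * k'))⁻¹ * f⁻¹ = (f * g ^ (k * k') * f⁻¹)⁻¹ := by group
    rcases e1 with e1 | e1 <;> rcases e2 with e2 | e2 <;> rw [e _ e1]
    · exact Or.inl e2
    · exact Or.inr e2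
    · rw [e3, e2]; exact Or.inr rfl
    · rw [e3, e2]; exact Or.inl (inv_inv _)

/-- If `h` moves the far endpoints `y`, `y'` of a quasi-geodesic through `x` by a bounded amount,
then `h • x` is near that quasi-geodesic. -/
lemma gromov_shift (hX : IsDeltaHyperbolic X δ) (hiso : IsometricAction G X) (h : G)
    {x y y' : X} {Q : ℝ} (hxy : gromov y y' x ≤ 9 * δ) (hy : dist (h • y) y ≤ Q)
    (hy' : dist (h • y') y' ≤ Q) (hQ : Q + 20 * δ ≤ dist y x) (hQ' : Q + 20 * δ ≤ dist y' x)
    (hδ : 0 < δ) : gromov y y' (h • x) ≤ 11 * δ := by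
  rw [← gromov_smul hiso h] at hxy
  have h1 := sub_le_gromov (h • y) y (h • x)
  have h2 := sub_le_gromov (h • y') y' (h • x)
  rw [dist_smul_iso hiso] at h1 h2
  have h3 := gromov_replace hX y hxy (by linarith)
  have h4 := gromov_replace_right hX y' h3 (by linarith)
  linarith

/-- Suppose `h` coarsely fixes two far away points `y`, `y'`. Then `h` changes the distance to `y`
(and to `y'`) by almost the same amount at all points of a bounded region. If a point `z` is far
from `[y, y']` compared with `dist (h • z) z`, then these two amounts agree at `z`, whereas near
`[y, y']` they are opposite; so both vanish up to a few `δ`, and `h` almost fixes the points of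
`[y, y']`. -/
lemma almost_fixes (hX : IsDeltaHyperbolic X δ) (hiso : IsometricAction G X) (hδ : 0 < δ) (h : G)
    {x z y y' : X} {Q R : ℝ} (hxy : gromov y y' x ≤ 9 * δ) (hy : dist (h • y) y ≤ Q)
    (hy' : dist (h • y') y' ≤ Q) (hxz : dist x z ≤ Q)
    (hQ : 10 * Q + 100 * δ ≤ dist y x) (hQ' : 10 * Q + 100 * δ ≤ dist y' x)
    (hR : dist (h • z) z ≤ R) (hB : R + δ < gromov y y' z) :
    dist (h • x) x ≤ 100 * δ := by
  have hQ0 : 0 ≤ Q := dist_nonneg.trans hy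
  have hsh := gromov_shift hX hiso h hxy hy hy' (by linarith) (by linarith) hδ
  have cocycle : ∀ y : X, dist (h • y) y ≤ Q → 10 * Q + 100 * δ ≤ dist y x →
      |(dist (h • x) y - dist x y) - (dist (h • z) y - dist z y)| ≤ 2 * δ := by
    intro y hy hQ
    have h1 := four_point hX (h • x) (h • z) y (h • y)
    have h2 := four_point hX (h • z) (h • x) y (h • y)
    have h3 := dist_triangle x z y
    rw [dist_smul_iso hiso, dist_smul_iso hiso, dist_smul_iso hiso, dist_comm y (h • y)] at h1 h2
    rw [dist_comm z x] at h2
    rw [dist_comm y x] at hQ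
    have p1 : dist x z + dist (h • y) y ≤ dist (h • z) y + dist x y :=
      by linarith [dist_nonneg (x := h • z) (y := y)]
    have p2 : dist x z + dist (h • y) y ≤ dist (h • x) y + dist z y :=
      by linarith [dist_nonneg (x := h • x) (y := y)]
    rw [max_eq_right p1] at h1
    rw [max_eq_right p2] at h2
    rw [abs_le]; constructor <;> linarith
  have c1 := abs_le.1 (cocycle y hy hQ)
  have c2 := abs_le.1 (cocycle y' hy' hQ')
  have d1 := four_point hX (h • z) z y y'
  have d2 := four_point hX (h • z) z y' y
  have t1 := dist_triangle_left z y (h • z)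
  have t2 := dist_triangle_left z y' (h • z)
  have d3 := four_point hX (h • x) y x y'
  have s1 := gromov_nonneg y y' x
  unfold gromov at hB hsh hxy s1
  rw [dist_comm y z, dist_comm y' z] at hB
  rw [dist_comm y (h • x), dist_comm y' (h • x)] at hsh
  rw [dist_comm y x, dist_comm y' x] at hxy s1
  rw [dist_comm y' y] at d2
  rw [dist_comm y x] at d3
  have m1 : dist (h • z) z + dist y y' ≤ dist z y + dist (h • z) y' := by linarith
  have m2 : dist (h • z) z + dist y y' ≤ dist z y' + dist (h • z) y := by linarith
  rw [max_eq_right m1] at d1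
  rw [max_eq_right m2] at d2
  rcases max_cases (dist (h • x) y + dist x y') (dist x y + dist (h • x) y') with h5 | h5 <;>
    linarith

lemma dist_smul_pow_eq (hiso : IsometricAction G X) {f g : G} (p : X) {k : ℕ}
    (h : f * g ^ k * f⁻¹ = g ^ k) (j : ℕ) :
    dist (f • g ^ (k * j) • p) (g ^ (k * j) • p) = dist (f • p) p := by
  have h1 : f * g ^ (k * j) = g ^ (k * j) * f := by
    rw [← mul_inv_eq_iff_eq_mul, conj_pow_mul h, pow_mul]
  rw [smul_smul, h1, mul_smul, dist_smul_iso hiso]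

lemma conj_inv_pow {f g : G} {k : ℕ} (h : f * g ^ k * f⁻¹ = g ^ k) :
    f * g⁻¹ ^ k * f⁻¹ = g⁻¹ ^ k := by
  have : f * g⁻¹ ^ k * f⁻¹ = (f * g ^ k * f⁻¹)⁻¹ := by group
  rw [this, h, inv_pow]

/-- An element commuting with a power of `g` and moving some point `z` by little compared with the
distance from `z` to the quasi-axis of `g` almost fixes this quasi-axis pointwise. -/
lemma comm_almost_fixes (hX : IsDeltaHyperbolic X δ) (hiso : IsometricAction G X) (hδ : 0 < δ)
    (hLδ : 2000 * δ ≤ L) {g h : G} {p z : X} (hg : HasAxis δ L g p) {k : ℕ} (hk : 0 < k)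
    (hcomm : h * g ^ k * h⁻¹ = g ^ k) {R : ℝ} (hR : dist (h • z) z ≤ R)
    (hB : ∀ J : ℕ, R + δ < gromov (g ^ J • p) (g⁻¹ ^ J • p) z) :
    dist (h • p) p ≤ 100 * δ ∧ dist (h • g • p) (g • p) ≤ 100 * δ := by
  have hL : 0 < L := by linarith
  set Q := dist (h • p) p + dist p z + dist (g • p) p with hQ
  have q1 := dist_nonneg (x := h • p) (y := p)
  have q2 := dist_nonneg (x := p) (y := z)
  have q3 := dist_nonneg (x := g • p) (y := p)
  set j := ⌈(11 * Q + 100 * δ) / L⌉₊ + 1 with hj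
  have hjL : 11 * Q + 100 * δ ≤ (k * j : ℕ) * L := by
    have h1 : (11 * Q + 100 * δ) / L ≤ j := by
      rw [hj]; push_cast; linarith [Nat.le_ceil ((11 * Q + 100 * δ) / L)]
    have h2 : ((11 * Q + 100 * δ) / L) * L = 11 * Q + 100 * δ := by field_simp
    have h3 : (j : ℝ) ≤ (k * j : ℕ) := by exact_mod_cast Nat.le_mul_of_pos_left j hk
    have h4 := mul_le_mul_of_nonneg_right (h1.trans h3) hL.le
    linarith
  have hj1 : 1 ≤ k * j := Nat.mul_pos hk (by omega)
  have l1 := hg.lower (k * j)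
  have l2 := (hg.inv hiso).lower (k * j)
  have e1 := dist_smul_pow_eq hiso p hcomm j
  have e2 := dist_smul_pow_eq hiso p (conj_inv_pow hcomm) j
  refine ⟨?_, ?_⟩
  · refine almost_fixes hX hiso hδ h (Q := Q) (hg.corner (k * j) (k * j)) ?_ ?_ ?_ ?_ ?_ hR
      (hB (k * j)) <;> linarith
  · have hc : gromov (g ^ (k * j) • p) (g⁻¹ ^ (k * j) • p) (g • p) ≤ 9 * δ := by
      have := hg.corner (k * j - 1) (k * j + 1)
      rw [← gromov_smul hiso g, smul_smul, smul_smul, ← pow_succ', Nat.sub_add_cancel hj1,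
        pow_succ' g⁻¹, mul_inv_cancel_left] at this
      exact this
    have t1 := dist_triangle (g ^ (k * j) • p) (g • p) p
    have t2 := dist_triangle (g⁻¹ ^ (k * j) • p) (g • p) p
    have t3 := dist_triangle (g • p) p z
    refine almost_fixes hX hiso hδ h (Q := Q) hc ?_ ?_ ?_ ?_ ?_ hR
      (hB (k * j)) <;> linarith

end Elementary

/-! ### Virtual cyclicity of groups preserving a quasi-axis -/

section VirtCyclic

variable {G : Type u} {X : Type v} [Group G] [MetricSpace X] [MulAction G X] {δ κ N L : ℝ}

lemma conj_inv_eq {f a : G} (h : f * a * f⁻¹ = a) : f⁻¹ * a * f⁻¹⁻¹ = a := by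
  nth_rewrite 1 [← h]; group

lemma conj_mul_eq {f f' a : G} (h : f * a * f⁻¹ = a) (h' : f' * a * f'⁻¹ = a) :
    f * f' * a * (f * f')⁻¹ = a := by
  have : f * f' * a * (f * f')⁻¹ = f * (f' * a * f'⁻¹) * f⁻¹ := by group
  rw [this, h', h]

/-- Only finitely many elements commute with `g ^ K` and move `p` by at most `2 * K * L`: such
an element moves `p` along the quasi-axis, and two elements with almost the same displacement
differ by an element almost fixing `p` and `g ^ K • p`. -/
lemma finite_comm_bounded (hX : IsDeltaHyperbolic X δ) (hiso : IsometricAction G X)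
    (hacy : AcylindricalAction G X δ κ N) (hδ : 0 < δ) (hLδ : 2000 * δ ≤ L) (hLκ : κ ≤ L)
    {g : G} {p : X} (hg : HasAxis δ L g p) {K : ℕ} (hK : 0 < K) :
    {f : G | f * g ^ K * f⁻¹ = g ^ K ∧ dist (f • p) p ≤ 2 * K * L}.Finite := by
  have hL : 0 < L := by linarith
  have hK1 : (1 : ℝ) ≤ K := by exact_mod_cast hK
  have hKL : L ≤ K * L := by nlinarith
  set y := g ^ (K * 21) • p with hy
  set y' := g⁻¹ ^ (K * 21) • p with hy'
  have l1 : 21 * (K * L) ≤ dist y p := by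
    have := hg.lower (K * 21); push_cast at this; linarith
  have l2 : 21 * (K * L) ≤ dist y' p := by
    have := (hg.inv hiso).lower (K * 21); push_cast at this; linarith
  have near : ∀ f : G, f * g ^ K * f⁻¹ = g ^ K → dist (f • p) p ≤ 2 * K * L →
      gromov y y' (f • p) ≤ 11 * δ := by
    intro f hf hfp
    refine gromov_shift hX hiso f (hg.corner _ _) (Q := 2 * K * L) ?_ ?_ ?_ ?_ hδ
    · rw [hy, dist_smul_pow_eq hiso p hf]; exact hfp
    · rw [hy', dist_smul_pow_eq hiso p (conj_inv_pow hf)]; exact hfp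
    · linarith
    · linarith
  have hfin := (hacy p (g ^ K • p) (by
    have := hg.lower K; rw [dist_comm]; linarith)).1
  refine Set.Finite.of_finite_fibers (fun f : G => ⌊dist (f • p) y' / δ⌋₊) ?_ ?_
  · refine (Set.finite_Iic ⌊(2 * K * L + dist p y') / δ⌋₊).subset ?_
    rintro _ ⟨f, hf, rfl⟩
    refine Nat.floor_le_floor ?_
    gcongr
    linarith [dist_triangle (f • p) p y', hf.2]
  · rintro _ ⟨f₀, hf₀, rfl⟩
    refine (hfin.image (fun a => f₀ * a)).subset ?_
    rintro f ⟨hf, hff⟩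
    refine ⟨f₀⁻¹ * f, ?_, by simp⟩
    have hfl : ⌊dist (f • p) y' / δ⌋₊ = ⌊dist (f₀ • p) y' / δ⌋₊ := hff
    have hd : |dist (f • p) y' - dist (f₀ • p) y'| ≤ δ := by
      have a1 := Nat.floor_le (div_nonneg (dist_nonneg (x := f • p) (y := y')) hδ.le)
      have a2 := Nat.lt_floor_add_one (dist (f • p) y' / δ)
      have b1 := Nat.floor_le (div_nonneg (dist_nonneg (x := f₀ • p) (y := y')) hδ.le)
      have b2 := Nat.lt_floor_add_one (dist (f₀ • p) y' / δ)
      rw [hfl] at a1 a2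
      rw [le_div_iff₀ hδ] at a1 b1
      rw [div_lt_iff₀ hδ] at a2 b2
      rw [abs_le]; constructor <;> linarith
    have h25 := dist_le_of_near hX (near f hf.1 hf.2) (near f₀ hf₀.1 hf₀.2) hd
    have hp : dist ((f₀⁻¹ * f) • p) p ≤ 100 * δ := by
      rw [mul_smul, dist_inv_smul hiso]; linarith
    refine ⟨hp, ?_⟩
    have := dist_smul_pow_eq hiso p (conj_mul_eq (conj_inv_eq hf₀.1) hf.1) 1
    rw [mul_one] at this
    rw [this]; exact hp

lemma descent_aux (hX : IsDeltaHyperbolic X δ) (hiso : IsometricAction G X)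
    (hδ : 0 < δ) (hLδ : 2000 * δ ≤ L) {g : G} {p : X} (hg : HasAxis δ L g p) {K : ℕ} (hK : 0 < K)
    {f : G} (hf : f * g ^ K * f⁻¹ = g ^ K) (hfp : 2 * K * L < dist (f • p) p) {j : ℕ}
    (hj : 1 ≤ j) (hjL : 10 * dist (f • p) p + 100 * δ ≤ (K * j : ℕ) * L)
    (hc : gromov (f • p) (g⁻¹ ^ (K * j) • p) p ≤ 10 * δ) :
    dist (f • p) (g ^ K • p) ≤ dist (f • p) p - δ := by
  have hL : 0 < L := by linarith
  have hK1 : (1 : ℝ) ≤ K := by exact_mod_cast hK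
  have hKL : L ≤ K * L := by nlinarith
  have hf0 := dist_nonneg (x := f • p) (y := p)
  have l1 := hg.lower (K * j)
  have l2 := (hg.inv hiso).lower (K * j)
  have m1 := hg.mid hiso (show K ≤ K * j from Nat.le_mul_of_pos_right K hj)
  have near := gromov_shift hX hiso f (hg.corner (K * j) (K * j)) (Q := dist (f • p) p)
    (dist_smul_pow_eq hiso p hf j).le (dist_smul_pow_eq hiso p (conj_inv_pow hf) j).le
    (by linarith) (by linarith) hδ
  have k1 := hg.lower K
  have k2 := hg.upper K
  set y := g ^ (K * j) • p
  set y' := g⁻¹ ^ (K * j) • p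
  have t := dist_triangle_right y y' p
  have h4 := four_point hX (f • p) p (g ^ K • p) y
  unfold gromov at m1 near hc
  rw [dist_comm y (f • p), dist_comm y' (f • p)] at near
  rw [dist_comm p y, dist_comm p (g ^ K • p)] at h4
  rw [dist_comm p y, dist_comm p (g ^ K • p)] at m1
  rw [dist_comm y (g ^ K • p)] at m1
  rcases max_cases (dist (f • p) p + dist (g ^ K • p) y)
    (dist (g ^ K • p) p + dist (f • p) y) with h5 | h5 <;> linarith

lemma descent_step (hX : IsDeltaHyperbolic X δ) (hiso : IsometricAction G X)
    (hδ : 0 < δ) (hLδ : 2000 * δ ≤ L) {g : G} {p : X} (hg : HasAxis δ L g p) {K : ℕ} (hK : 0 < K)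
    {f : G} (hf : f * g ^ K * f⁻¹ = g ^ K) (hfp : 2 * K * L < dist (f • p) p) :
    dist (f • p) (g ^ K • p) ≤ dist (f • p) p - δ ∨
      dist (f • p) (g⁻¹ ^ K • p) ≤ dist (f • p) p - δ := by
  have hL : 0 < L := by linarith
  set A := 10 * dist (f • p) p + 100 * δ with hA
  set j := ⌈A / L⌉₊ + 1 with hj
  have hjL : A ≤ (K * j : ℕ) * L := by
    have h1 : A / L ≤ j := by rw [hj]; push_cast; linarith [Nat.le_ceil (A / L)]
    have h2 : A / L * L = A := by field_simp
    have h3 : (j : ℝ) ≤ (K * j : ℕ) := by exact_mod_cast Nat.le_mul_of_pos_left j hK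
    have h4 := mul_le_mul_of_nonneg_right (h1.trans h3) hL.le
    linarith
  have h := hX (g ^ (K * j) • p) (f • p) (g⁻¹ ^ (K * j) • p) p
  have hc := hg.corner (K * j) (K * j)
  rcases min_le_iff.1 (by linarith :
    min (gromov (g ^ (K * j) • p) (f • p) p) (gromov (f • p) (g⁻¹ ^ (K * j) • p) p) ≤ 10 * δ)
    with h1 | h1
  · right
    refine descent_aux hX hiso hδ hLδ (hg.inv hiso) hK (conj_inv_pow hf) hfp (by omega) hjL ?_
    rw [inv_inv, gromov_comm]; exact h1
  · left
    exact descent_aux hX hiso hδ hLδ hg hK hf hfp (by omega) hjL h1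

/-- Every element commuting with `g ^ K` can be brought back to bounded displacement by powers of
`g ^ K`. -/
lemma exists_zpow_bounded (hX : IsDeltaHyperbolic X δ) (hiso : IsometricAction G X)
    (hδ : 0 < δ) (hLδ : 2000 * δ ≤ L) {g : G} {p : X} (hg : HasAxis δ L g p) {K : ℕ} (hK : 0 < K)
    (m : ℕ) : ∀ f : G, f * g ^ K * f⁻¹ = g ^ K → dist (f • p) p ≤ m * δ →
      ∃ i : ℤ, dist (((g ^ K) ^ i * f) • p) p ≤ 2 * K * L := by
  have hL : 0 < L := by linarith
  induction m with
  | zero =>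
    intro f _ hfp
    refine ⟨0, ?_⟩
    simp only [zpow_zero, one_mul]
    push_cast at hfp
    have : 0 ≤ 2 * K * L := by positivity
    linarith
  | succ m ih =>
    intro f hf hfp
    push_cast at hfp
    by_cases hlt : 2 * K * L < dist (f • p) p
    · have hgK : g ^ K * g ^ K * (g ^ K)⁻¹ = g ^ K := by group
      rcases descent_step hX hiso hδ hLδ hg hK hf hlt with h | h
      · obtain ⟨i, hi⟩ := ih ((g ^ K)⁻¹ * f) (conj_mul_eq (conj_inv_eq hgK) hf) (by
          rw [mul_smul, dist_inv_smul hiso]; linarith)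
        refine ⟨i - 1, ?_⟩
        rwa [zpow_sub_one, mul_assoc]
      · obtain ⟨i, hi⟩ := ih (g ^ K * f) (conj_mul_eq hgK hf) (by
          have := dist_inv_smul hiso (g⁻¹ ^ K) (f • p) p
          rw [inv_pow, inv_inv] at this
          rw [inv_pow] at h
          rw [mul_smul, this]; linarith)
        refine ⟨i + 1, ?_⟩
        rwa [zpow_add_one, mul_assoc]
    · refine ⟨0, ?_⟩
      simp only [zpow_zero, one_mul]
      linarith

lemma virtuallyCyclic_of_uniform (hX : IsDeltaHyperbolic X δ) (hiso : IsometricAction G X)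
    (hacy : AcylindricalAction G X δ κ N) (hδ : 0 < δ) (hLδ : 2000 * δ ≤ L) (hLκ : κ ≤ L)
    {g : G} {p : X} (hg : HasAxis δ L g p) {K : ℕ} (hK : 0 < K) (Γ : Subgroup G) (hgΓ : g ∈ Γ)
    (hΓ : ∀ f ∈ Γ, f * g ^ K * f⁻¹ = g ^ K ∨ f * g ^ K * f⁻¹ = (g ^ K)⁻¹) :
    VirtuallyCyclic Γ := by
  set a : Γ := ⟨g ^ K, Γ.pow_mem hgΓ K⟩ with ha
  refine ⟨Subgroup.zpowers a, inferInstance, ?_⟩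
  have hT := finite_comm_bounded hX hiso hacy hδ hLδ hLκ hg hK
  set T := {f : G | f * g ^ K * f⁻¹ = g ^ K ∧ dist (f • p) p ≤ 2 * K * L}
  have hT' : {t : Γ | (t : G) ∈ T}.Finite := hT.preimage Subtype.val_injective.injOn
  -- `τ` represents the elements inverting `g ^ K`, if there are any
  obtain ⟨τ, hτ⟩ : ∃ τ : Γ, ∀ f : Γ, ((f⁻¹ : Γ) : G) * g ^ K * ((f⁻¹ : Γ) : G)⁻¹ = g ^ K ∨
      ((f⁻¹ * τ : Γ) : G) * g ^ K * ((f⁻¹ * τ : Γ) : G)⁻¹ = g ^ K := by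
    by_cases hex : ∃ τ : Γ, (τ : G) * g ^ K * (τ : G)⁻¹ = (g ^ K)⁻¹
    · obtain ⟨τ, hτ⟩ := hex
      refine ⟨τ, fun f => ?_⟩
      rcases hΓ _ (f⁻¹).2 with h | h
      · exact Or.inl h
      · right
        have : ((f⁻¹ * τ : Γ) : G) * g ^ K * ((f⁻¹ * τ : Γ) : G)⁻¹ =
            (f⁻¹ : Γ) * ((τ : G) * g ^ K * (τ : G)⁻¹) * ((f⁻¹ : Γ) : G)⁻¹ := by
          push_cast; group
        rw [this, hτ]
        have e : ((f⁻¹ : Γ) : G) * (g ^ K)⁻¹ * ((f⁻¹ : Γ) : G)⁻¹ =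
            (((f⁻¹ : Γ) : G) * g ^ K * ((f⁻¹ : Γ) : G)⁻¹)⁻¹ := by group
        rw [e, h, inv_inv]
    · refine ⟨1, fun f => Or.inl ?_⟩
      rcases hΓ _ (f⁻¹).2 with h | h
      · exact h
      · exact absurd ⟨f⁻¹, h⟩ hex
  have key : ∀ f : Γ, (f : G) * g ^ K * (f : G)⁻¹ = g ^ K →
      ∃ t : Γ, (t : G) ∈ T ∧ ∃ i : ℤ, f⁻¹ = t⁻¹ * a ^ i := by
    intro f hf
    obtain ⟨i, hi⟩ := exists_zpow_bounded hX hiso hδ hLδ hg hK ⌈dist ((f : G) • p) p / δ⌉₊ f hf (by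
      have := Nat.le_ceil (dist ((f : G) • p) p / δ)
      rwa [div_le_iff₀ hδ] at this)
    refine ⟨a ^ i * f, ⟨?_, ?_⟩, i, by group⟩
    · have : (g ^ K) ^ i * g ^ K * ((g ^ K) ^ i)⁻¹ = g ^ K := by
        rw [← zpow_add_one, add_comm, zpow_add, zpow_one]; group
      push_cast
      exact conj_mul_eq this hf
    · push_cast; exact hi
  have : Finite (Γ ⧸ Subgroup.zpowers a) := by
    rw [← Set.finite_univ_iff]
    refine ((hT'.image (fun t => ((t⁻¹ : Γ) : Γ ⧸ Subgroup.zpowers a))).union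
      (hT'.image (fun t => ((τ * t⁻¹ : Γ) : Γ ⧸ Subgroup.zpowers a)))).subset ?_
    intro q _
    induction q using QuotientGroup.induction_on with
    | H f =>
      rcases hτ f with h | h
      · obtain ⟨t, ht, i, hi⟩ := key _ h
        refine Or.inl ⟨t, ht, ?_⟩
        rw [inv_inv] at hi
        refine QuotientGroup.eq.2 ⟨i, ?_⟩
        simp only [hi]; group
      · obtain ⟨t, ht, i, hi⟩ := key _ h
        refine Or.inr ⟨t, ht, ?_⟩
        refine QuotientGroup.eq.2 ⟨i, ?_⟩
        have hf : f = τ * (t⁻¹ * a ^ i) := by rw [← hi]; group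
        simp only [hf]; group
  exact Subgroup.finiteIndex_of_finite_quotient

/-- A finite set generating a group that is not virtually cyclic is not contained in the elementary
closure of an element of this group. -/
lemma exists_notMem_elemClosure (hX : IsDeltaHyperbolic X δ) (hiso : IsometricAction G X)
    (hacy : AcylindricalAction G X δ κ N) (hδ : 0 < δ) (hLδ : 2000 * δ ≤ L) (hLκ : κ ≤ L)
    {g : G} {p : X} (hg : HasAxis δ L g p) {U : Set G} (hU : U.Finite)
    (hgU : g ∈ Subgroup.closure U) (hvc : ¬ VirtuallyCyclic (Subgroup.closure U)) :
    ∃ u ∈ U, u ∉ elemClosure g := by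
  by_contra! hcon
  obtain ⟨K, hK, hKU⟩ : ∃ K : ℕ, 0 < K ∧ ∀ u ∈ U,
      u * g ^ K * u⁻¹ = g ^ K ∨ u * g ^ K * u⁻¹ = (g ^ K)⁻¹ := by
    clear hgU hvc
    induction U, hU using Set.Finite.induction_on with
    | empty => exact ⟨1, one_pos, by simp⟩
    | @insert u s _ _ ih =>
      obtain ⟨K, hK, h⟩ := ih fun v hv => hcon v (Set.mem_insert_of_mem _ hv)
      obtain ⟨k, hk, h'⟩ := hcon u (Set.mem_insert _ _)
      have ext : ∀ (v : G) (k l : ℕ), (v * g ^ k * v⁻¹ = g ^ k ∨ v * g ^ k * v⁻¹ = (g ^ k)⁻¹) →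
          (v * g ^ (k * l) * v⁻¹ = g ^ (k * l) ∨ v * g ^ (k * l) * v⁻¹ = (g ^ (k * l))⁻¹) := by
        rintro v k l (h | h)
        · left; rw [conj_pow_mul h, pow_mul]
        · right; rw [conj_pow_mul h, pow_mul, inv_pow]
      refine ⟨k * K, Nat.mul_pos hk hK, ?_⟩
      rintro v (rfl | hv)
      · exact ext v k K h'
      · rw [mul_comm]; exact ext v K k (h v hv)
  refine hvc (virtuallyCyclic_of_uniform hX hiso hacy hδ hLδ hLκ hg hK _ hgU ?_)
  have hflip : ∀ {f b c : G}, f * b * f⁻¹ = c → f * b⁻¹ * f⁻¹ = c⁻¹ := by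
    rintro f b c rfl; group
  intro f hf
  induction hf using Subgroup.closure_induction with
  | mem u hu => exact hKU u hu
  | one => left; simp
  | mul f f' _ _ h h' =>
    have e : f * f' * g ^ K * (f * f')⁻¹ = f * (f' * g ^ K * f'⁻¹) * f⁻¹ := by group
    rw [e]
    rcases h' with h' | h' <;> rcases h with h | h <;> rw [h']
    · exact Or.inl h
    · exact Or.inr h
    · exact Or.inr (hflip h)
    · left; rw [hflip h, inv_inv]
  | inv f _ h =>
    rcases h with h | h
    · exact Or.inl (conj_inv_eq h)
    · right
      have h' : g ^ K = f * (g ^ K)⁻¹ * f⁻¹ := by rw [hflip h, inv_inv]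
      nth_rewrite 1 [h']; group

end VirtCyclic

/-! ### Reduced sets generate free groups -/

section Freeness

variable {G : Type u} {X : Type v} [Group G] [MetricSpace X] [MulAction G X] {δ : ℝ}

lemma ReducedAt.dist_gt {S : Set G} {p : X} (hS : ReducedAt δ (200 * δ) S p) {s : G}
    (hiso : IsometricAction G X) (hs : s ∈ S ∪ S⁻¹) : 500 * δ < dist (s • p) p := by
  have hs' : s⁻¹ ∈ S ∪ S⁻¹ := by
    rcases hs with hs | hs
    · right; simpa using hs
    · left; exact hs
  have hne : s ≠ s⁻¹ := by
    intro h
    have hmem : s ∈ S ∩ S⁻¹ := by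
      rcases hs with hs | hs
      · exact ⟨hs, by rw [Set.mem_inv, ← h]; exact hs⟩
      · exact ⟨by rw [h]; exact hs, hs⟩
    rw [hS.1] at hmem; exact hmem
  have h := hS.2 s hs s⁻¹ hs' hne
  have h0 := gromov_nonneg (s • p) (s⁻¹ • p) p
  rw [dist_inv_smul_self hiso, min_self] at h
  linarith

/-- A nonempty reduced word over `S` moves `p` in the direction of its first letter. -/
lemma ReducedAt.word (hX : IsDeltaHyperbolic X δ) (hiso : IsometricAction G X) (hδ : 0 < δ)
    {S : Set G} {p : X} (hS : ReducedAt δ (200 * δ) S p) (l : List G) :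
    ∀ s : G, (∀ a ∈ s :: l, a ∈ S ∪ S⁻¹) → List.IsChain (fun a b => a⁻¹ ≠ b) (s :: l) →
      dist (s • p) p / 2 + 200 * δ ≤ gromov ((s :: l).prod • p) (s • p) p := by
  induction l with
  | nil =>
    intro s hs _
    have := hS.dist_gt hiso (hs s (by simp))
    have e : gromov (s • p) (s • p) p = dist (s • p) p := by unfold gromov; rw [dist_self]; ring
    rw [List.prod_singleton, e]; linarith
  | cons t l ih =>
    intro s hs hc
    have hs1 := hs s (by simp)
    have ht1 := hs t (by simp)
    rw [List.isChain_cons_cons] at hc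
    have h1 := ih t (fun a ha => hs a (List.mem_cons_of_mem _ ha)) hc.2
    have hs' : s⁻¹ ∈ S ∪ S⁻¹ := by
      rcases hs1 with hs1 | hs1
      · right; simpa using hs1
      · left; exact hs1
    have h2 := hS.2 s⁻¹ hs' t ht1 hc.1
    rw [dist_inv_smul_self hiso] at h2
    have m1 := min_le_left (dist (s • p) p) (dist (t • p) p)
    have m2 := min_le_right (dist (s • p) p) (dist (t • p) p)
    have h3 := hX (s⁻¹ • p) ((t :: l).prod • p) (t • p) p
    have h4 : gromov (s⁻¹ • p) ((t :: l).prod • p) p ≤ dist (s • p) p / 2 - 249 * δ := by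
      rcases le_total (gromov (s⁻¹ • p) ((t :: l).prod • p) p)
        (gromov ((t :: l).prod • p) (t • p) p) with h | h
      · rw [min_eq_left h] at h3; linarith
      · rw [min_eq_right h] at h3; linarith
    rw [← gromov_smul hiso s, smul_inv_smul, smul_smul, ← List.prod_cons] at h4
    have h5 := gromov_add ((s :: t :: l).prod • p) p (s • p)
    rw [gromov_comm p] at h4
    rw [dist_comm p] at h5
    linarith

lemma ReducedAt.injective (hX : IsDeltaHyperbolic X δ) (hiso : IsometricAction G X) (hδ : 0 < δ)
    {S : Set G} {p : X} (hS : ReducedAt δ (200 * δ) S p) :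
    Function.Injective (FreeGroup.lift (Subtype.val : S → G)) := by
  classical
  rw [injective_iff_map_eq_one]
  intro w hw
  by_contra hne
  obtain ⟨⟨x, b⟩, l, hl⟩ : ∃ x l, w.toWord = x :: l := by
    rcases h : w.toWord with _ | ⟨x, l⟩
    · exact absurd (FreeGroup.toWord_eq_nil_iff.1 h) hne
    · exact ⟨x, l, rfl⟩
  set φ : S × Bool → G := fun x => cond x.2 (x.1 : G) (x.1 : G)⁻¹ with hφ
  have hprod : (w.toWord.map φ).prod = 1 := by
    rw [← hw]
    conv_rhs => rw [← FreeGroup.mk_toWord (x := w)]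
    rw [FreeGroup.lift_mk]
  have hmem : ∀ x : S × Bool, φ x ∈ S ∪ S⁻¹ := by
    rintro ⟨x, _ | _⟩
    · right; simp [hφ]
    · left; simp [hφ]
  have hred : FreeGroup.IsReduced w.toWord := FreeGroup.isReduced_toWord
  have hchain : List.IsChain (fun a b => a⁻¹ ≠ b) (w.toWord.map φ) := by
    rw [List.isChain_map]
    refine List.IsChain.imp ?_ hred
    rintro ⟨x, b⟩ ⟨y, c⟩ h heq
    have hS1 := hS.1
    have dis : ∀ x y : S, (x : G)⁻¹ ≠ y := by
      intro x y h
      have : (x : G) ∈ S ∩ S⁻¹ := ⟨x.2, by rw [Set.mem_inv, h]; exact y.2⟩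
      rw [hS1] at this; exact this
    rcases b with _ | _ <;> rcases c with _ | _ <;> simp only [hφ, cond_true, cond_false] at heq
    · exact dis y x (by rw [← heq, inv_inv])
    · have : x = y := Subtype.ext (by rw [← heq, inv_inv])
      simpa using h this
    · have : x = y := Subtype.ext (inv_injective heq)
      simpa using h this
    · exact dis x y heq
  rw [hl, List.map_cons] at hprod hchain
  have h1 := hS.word hX hiso hδ (l.map φ) (φ (x, b)) (by
    intro a ha
    rw [← List.map_cons, List.mem_map] at ha
    obtain ⟨z, _, rfl⟩ := ha
    exact hmem z) hchain
  rw [hprod, one_smul] at h1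
  have h2 := gromov_le_left p (φ (x, b) • p) p
  rw [dist_self] at h2
  linarith [dist_nonneg (x := φ (x, b) • p) (y := p)]

end Freeness

/-! ### Conjugates of a large power of `g` -/

section PingPong

variable {G : Type u} {X : Type v} [Group G] [MetricSpace X] [MulAction G X] {δ κ N L : ℝ}

/-- Rigidity, in contrapositive form: a translate of the quasi-axis of `g` by an element outside the
elementary closure diverges from the quasi-axis, in all directions. -/
lemma gromov_lt_of_notMem (hX : IsDeltaHyperbolic X δ) (hiso : IsometricAction G X)
    (hacy : AcylindricalAction G X δ κ N) (hδ : 0 < δ) (hN : 0 < N) (hLδ : 2000 * δ ≤ L)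
    (hLκ : κ ≤ L) {g : G} {p : X} (hg : HasAxis δ L g p) {f : G} (hf : f ∉ elemClosure g)
    {a b : G} (ha : a = g ∨ a = g⁻¹) (hb : b = g ∨ b = g⁻¹) (M₁ M₂ : ℕ) :
    gromov (a ^ M₁ • p) (f • b ^ M₂ • p) p < 4 * dist (f • p) p + 10 * (N + 1) * L := by
  by_contra! hcon
  have hax : ∀ a : G, (a = g ∨ a = g⁻¹) → HasAxis δ L a p := by
    rintro a (rfl | rfl)
    · exact hg
    · exact hg.inv hiso
  have hd : ∀ a : G, (a = g ∨ a = g⁻¹) → ∀ i : ℕ, dist (a ^ i • p) p = dist (g ^ i • p) p := by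
    rintro a (rfl | rfl) i
    · rfl
    · exact dist_inv_pow_smul hiso g p i
  obtain ⟨k, hk, h⟩ := rigidity hX hiso hacy hδ hN hLδ hLκ (hax a ha) (hax b hb)
    (fun i => by rw [hd a ha, hd b hb]) f M₁ M₂ hcon
  refine hf ⟨k, hk, ?_⟩
  have hinv : f * g⁻¹ ^ k * f⁻¹ = (f * g ^ k * f⁻¹)⁻¹ := by group
  rcases ha with rfl | rfl <;> rcases hb with rfl | rfl
  · exact Or.inl h
  · rw [hinv] at h; exact Or.inr (inv_eq_iff_eq_inv.1 h)
  · rw [inv_pow] at h; exact Or.inr h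
  · rw [hinv, inv_pow, inv_inj] at h; exact Or.inl h

/-- If `z = c⁻¹ • p` is far from the quasi-axis of `g`, few elements `v` of bounded displacement
have the property that `x₀⁻¹ * v * c` conjugates a power of `g` to the same power of `b`. -/
lemma card_le_of_conj (hX : IsDeltaHyperbolic X δ) (hiso : IsometricAction G X)
    (hacy : AcylindricalAction G X δ κ N) (hδ : 0 < δ) (hN : 0 < N) (hLδ : 2000 * δ ≤ L)
    (hLκ : κ ≤ L) {g : G} {p : X} (hg : HasAxis δ L g p) {R : ℝ} (c x₀ b : G)
    (hB : ∀ J : ℕ, R + δ < gromov (g ^ J • p) (g⁻¹ ^ J • p) (c⁻¹ • p)) (V : Finset G)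
    (hV : ∀ v ∈ V, ∃ k : ℕ, 0 < k ∧ (x₀⁻¹ * (v * c)) * g ^ k * (x₀⁻¹ * (v * c))⁻¹ = b ^ k)
    (hR : ∀ v ∈ V, ∀ v' ∈ V, dist ((v⁻¹ * v') • p) p ≤ R) : (V.card : ℝ) ≤ N := by
  rcases V.eq_empty_or_nonempty with rfl | ⟨v₁, hv₁⟩
  · simpa using hN.le
  obtain ⟨hfin, hcard⟩ := hacy p (g • p) (by
    have := hg.lower 1; rw [dist_comm]; simp only [pow_one, Nat.cast_one] at this; linarith)
  refine le_trans ?_ hcard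
  rw [Set.ncard_eq_toFinset_card _ hfin, Nat.cast_le]
  refine Finset.card_le_card_of_injOn (fun v => (v₁ * c)⁻¹ * (v * c)) ?_ ?_
  · intro v hv
    rw [Set.Finite.coe_toFinset]
    obtain ⟨k, hk, h⟩ := hV v hv
    obtain ⟨k₁, hk₁, h₁⟩ := hV v₁ hv₁
    have e : (v₁ * c)⁻¹ * (v * c) = (x₀⁻¹ * (v₁ * c))⁻¹ * (x₀⁻¹ * (v * c)) := by group
    have h' := conj_pow_mul h k₁
    have h₁' := conj_pow_mul h₁ k
    rw [← pow_mul] at h' h₁'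
    rw [mul_comm k₁ k] at h₁'
    refine comm_almost_fixes hX hiso hδ hLδ hg (Nat.mul_pos hk hk₁) ?_ (z := c⁻¹ • p) ?_ hB
    · simp only [e]
      generalize x₀⁻¹ * (v₁ * c) = r at *
      generalize x₀⁻¹ * (v * c) = s at *
      have : r⁻¹ * s * g ^ (k * k₁) * (r⁻¹ * s)⁻¹ = r⁻¹ * (s * g ^ (k * k₁) * s⁻¹) * r := by group
      rw [this, h', ← h₁']; group
    · have : ((v₁ * c)⁻¹ * (v * c)) • c⁻¹ • p = c⁻¹ • (v₁⁻¹ * v) • p := by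
        rw [smul_smul, smul_smul]; congr 1; group
      simp only [this]
      rw [dist_smul_iso hiso]
      exact hR v₁ hv₁ v hv
  · intro v _ v' _ h
    simpa using h

/-- Conjugates of a large power of `g` by elements in different cosets of the elementary closure
form a reduced set. -/
lemma reduced_conjugates (hX : IsDeltaHyperbolic X δ) (hiso : IsometricAction G X)
    (hacy : AcylindricalAction G X δ κ N) (hδ : 0 < δ) (hN : 0 < N) (hLδ : 2000 * δ ≤ L)
    (hLκ : κ ≤ L) {g : G} {p : X} (hg : HasAxis δ L g p) {D : ℝ} {M : ℕ} (Y : Set G)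
    (hD : ∀ x ∈ Y, dist (x • p) p ≤ D)
    (hY : ∀ x ∈ Y, ∀ x' ∈ Y, x ≠ x' → x⁻¹ * x' ∉ elemClosure g)
    (hM : 11 * D + 10 * (N + 1) * L < (M * L - 2 * D) / 2 - 250 * δ) :
    Set.InjOn (fun x => x * g ^ M * x⁻¹) Y ∧
      ReducedAt δ (200 * δ) ((fun x => x * g ^ M * x⁻¹) '' Y) p := by
  have hL : 0 < L := by linarith
  have hNL : 0 < 10 * (N + 1) * L := by positivity
  have hlow : ∀ x ∈ Y, ∀ a : G, (a = g ∨ a = g⁻¹) →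
      M * L - 2 * D ≤ dist ((x * a ^ M * x⁻¹) • p) p := by
    intro x hx a ha
    have h1 : M * L ≤ dist (a ^ M • p) p := by
      rcases ha with rfl | rfl
      · exact hg.lower M
      · exact (hg.inv hiso).lower M
    have h2 : a ^ M = x⁻¹ * ((x * a ^ M * x⁻¹) * x) := by group
    have h3 := dist_mul_smul_le hiso x⁻¹ ((x * a ^ M * x⁻¹) * x) p
    have h4 := dist_mul_smul_le hiso (x * a ^ M * x⁻¹) x p
    rw [← h2, dist_inv_smul_self hiso] at h3
    linarith [hD x hx]
  -- moving the base point and the endpoints of `x * a ^ M * x⁻¹` costs at most `3 * D`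
  have hmove : ∀ x ∈ Y, ∀ x' ∈ Y, ∀ a b : G,
      gromov ((x * a ^ M * x⁻¹) • p) ((x' * b ^ M * x'⁻¹) • p) p ≤
        gromov (a ^ M • p) ((x⁻¹ * x') • b ^ M • p) p + 3 * D := by
    intro x hx x' hx' a b
    have h1 := gromov_le_move_left ((x * a ^ M * x⁻¹) • p) ((x * a ^ M) • p)
      ((x' * b ^ M * x'⁻¹) • p) p
    have h2 := gromov_le_move_right ((x * a ^ M) • p) ((x' * b ^ M * x'⁻¹) • p)
      ((x' * b ^ M) • p) p
    have h3 := gromov_le_base ((x * a ^ M) • p) ((x' * b ^ M) • p) p (x • p)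
    rw [mul_smul (x * a ^ M), dist_smul_iso hiso, dist_inv_smul_self hiso] at h1
    rw [mul_smul (x' * b ^ M), dist_smul_iso hiso, dist_inv_smul_self hiso] at h2
    have e : gromov ((x * a ^ M) • p) ((x' * b ^ M) • p) (x • p) =
        gromov (a ^ M • p) ((x⁻¹ * x') • b ^ M • p) p := by
      rw [← gromov_smul hiso x (a ^ M • p), smul_smul, smul_smul, smul_smul]
      congr 2; group
    rw [e, dist_comm p] at h3
    rw [mul_smul (x' * b ^ M)] at h1
    rw [mul_smul (x * a ^ M), mul_smul (x' * b ^ M)]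
    linarith [hD x hx, hD x' hx']
  have key1 : ∀ x ∈ Y, ∀ x' ∈ Y, x ≠ x' → ∀ a b : G, (a = g ∨ a = g⁻¹) → (b = g ∨ b = g⁻¹) →
      gromov ((x * a ^ M * x⁻¹) • p) ((x' * b ^ M * x'⁻¹) • p) p <
        (M * L - 2 * D) / 2 - 250 * δ := by
    intro x hx x' hx' hne a b ha hb
    have h1 := hmove x hx x' hx' a b
    have h2 := gromov_lt_of_notMem hX hiso hacy hδ hN hLδ hLκ hg (hY x hx x' hx' hne) ha hb M M
    have h3 := dist_mul_smul_le hiso x⁻¹ x' p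
    rw [dist_inv_smul_self hiso] at h3
    linarith [hD x hx, hD x' hx']
  have key2 : ∀ x ∈ Y, gromov ((x * g ^ M * x⁻¹) • p) ((x * g⁻¹ ^ M * x⁻¹) • p) p <
        (M * L - 2 * D) / 2 - 250 * δ := by
    intro x hx
    have h1 := hmove x hx x hx g g⁻¹
    rw [inv_mul_cancel, one_smul] at h1
    have h2 := hg.corner M M
    have h3 : L ≤ 10 * (N + 1) * L := by nlinarith
    have h4 := dist_nonneg.trans (hD x hx)
    linarith
  have hself : ∀ y : X, gromov y y p = dist y p := by
    intro y; unfold gromov; rw [dist_self]; ring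
  have hlow' : ∀ x ∈ Y, ∀ a : G, (a = g ∨ a = g⁻¹) →
      ¬ dist ((x * a ^ M * x⁻¹) • p) p < (M * L - 2 * D) / 2 - 250 * δ := by
    intro x hx a ha h
    have h1 := hlow x hx a ha
    have h4 := dist_nonneg.trans (hD x hx)
    linarith
  have hinv : ∀ x : G, (x * g ^ M * x⁻¹)⁻¹ = x * g⁻¹ ^ M * x⁻¹ := by intro x; group
  refine ⟨?_, ?_, ?_⟩
  · intro x hx x' hx' h
    by_contra hne
    have h1 := key1 x hx x' hx' hne g g (Or.inl rfl) (Or.inl rfl)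
    simp only at h
    rw [← h, hself] at h1
    exact hlow' x hx g (Or.inl rfl) h1
  · rw [Set.eq_empty_iff_forall_notMem]
    rintro _ ⟨⟨x, hx, rfl⟩, ⟨x', hx', h⟩⟩
    simp only at h
    have h' : x * g⁻¹ ^ M * x⁻¹ = x' * g ^ M * x'⁻¹ := by rw [h, hinv]
    by_cases hne : x = x'
    · subst hne
      have h1 := key2 x hx
      rw [h', hself] at h1
      exact hlow' x hx g (Or.inl rfl) h1
    · have h1 := key1 x hx x' hx' hne g⁻¹ g (Or.inr rfl) (Or.inl rfl)
      rw [← h', hself] at h1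
      exact hlow' x hx g⁻¹ (Or.inr rfl) h1
  · have hform : ∀ s ∈ ((fun x => x * g ^ M * x⁻¹) '' Y) ∪ ((fun x => x * g ^ M * x⁻¹) '' Y)⁻¹,
        ∃ x ∈ Y, ∃ a : G, (a = g ∨ a = g⁻¹) ∧ s = x * a ^ M * x⁻¹ := by
      rintro s (⟨x, hx, rfl⟩ | ⟨x, hx, h⟩)
      · exact ⟨x, hx, g, Or.inl rfl, rfl⟩
      · refine ⟨x, hx, g⁻¹, Or.inr rfl, ?_⟩
        rw [← hinv, ← inv_inv s, ← h]
    intro s₁ hs₁ s₂ hs₂ hne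
    obtain ⟨x, hx, a, ha, rfl⟩ := hform s₁ hs₁
    obtain ⟨x', hx', b, hb, rfl⟩ := hform s₂ hs₂
    have hmin := le_min (hlow x hx a ha) (hlow x' hx' b hb)
    suffices gromov ((x * a ^ M * x⁻¹) • p) ((x' * b ^ M * x'⁻¹) • p) p <
        (M * L - 2 * D) / 2 - 250 * δ by linarith
    by_cases hxx : x = x'
    · subst hxx
      rcases ha with rfl | rfl <;> rcases hb with rfl | rfl
      · exact absurd rfl hne
      · exact key2 x hx
      · rw [gromov_comm]; exact key2 x hx
      · exact absurd rfl hne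
    · exact key1 x hx x' hx' hxx a b ha hb

end PingPong

/-! ### Powers of the generating set and conclusion -/

section Main

variable {G : Type u} {X : Type v} [Group G] [MetricSpace X] [MulAction G X] {δ κ N L : ℝ}

lemma dist_le_of_mem_pow (hiso : IsometricAction G X) {U : Set G} (hU : U.Finite) (p : X) (k : ℕ) :
    ∀ v ∈ U ^ k, dist (v • p) p ≤ k * energyAt U p := by
  induction k with
  | zero => intro v hv; simp at hv; simp [hv]
  | succ k ih =>
    intro v hv
    rw [pow_succ] at hv
    obtain ⟨a, ha, b, hb, rfl⟩ := hv
    have h1 := dist_mul_smul_le hiso a b p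
    have h2 := ih a ha
    have h3 := dist_le_energyAt hU p hb
    push_cast
    linarith

lemma finite_pow {U : Set G} (hU : U.Finite) (k : ℕ) : (U ^ k).Finite := by
  induction k with
  | zero => rw [pow_zero]; exact Set.finite_one
  | succ k ih => rw [pow_succ]; exact ih.mul hU

lemma mul_mem_pow {U : Set G} {a b : G} {k l : ℕ} (ha : a ∈ U ^ k) (hb : b ∈ U ^ l) :
    a * b ∈ U ^ (k + l) := by
  rw [pow_add]; exact Set.mul_mem_mul ha hb

lemma inv_mem_pow {U : Set G} (hsym : U⁻¹ = U) {a : G} {k : ℕ} (ha : a ∈ U ^ k) :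
    a⁻¹ ∈ U ^ k := by
  have : (U ^ k)⁻¹ = U ^ k := by rw [← inv_pow, hsym]
  rw [← this]; simpa using ha

lemma pow_mem_pow {U : Set G} {a : G} (ha : a ∈ U ^ 2) (k : ℕ) : a ^ k ∈ U ^ (2 * k) := by
  rw [pow_mul]; exact Set.pow_mem_pow ha

lemma pow_subset_pow_add {U : Set G} (hne : U.Nonempty) (hsym : U⁻¹ = U) (k j : ℕ) :
    U ^ k ⊆ U ^ (k + 2 * j) := by
  obtain ⟨u, hu⟩ := hne
  have h1 : (1 : G) ∈ U ^ 2 := by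
    have hu1 : u ∈ U ^ 1 := by rwa [pow_one]
    have := mul_mem_pow hu1 (inv_mem_pow hsym hu1)
    rwa [mul_inv_cancel] at this
  intro a ha
  have := mul_mem_pow ha (pow_mem_pow h1 j)
  rwa [one_pow, mul_one] at this

/-- Powers of an element with a quasi-axis are distinct, so `U ^ (2 * a)` is large. -/
lemma lt_ncard_pow {U : Set G} (hU : U.Finite) (hne : U.Nonempty) (hsym : U⁻¹ = U) {g : G} {p : X}
    (hL : 0 < L) (hg : HasAxis δ L g p) (hgU : g ∈ U ^ 2) (a : ℕ) : a < (U ^ (2 * a)).ncard := by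
  have hfin : (U ^ (2 * a)).Finite := finite_pow hU _
  rw [Set.ncard_eq_toFinset_card _ hfin]
  have key : ∀ i d : ℕ, g ^ i = g ^ (i + d) → d = 0 := by
    intro i d h
    rw [pow_add, left_eq_mul] at h
    have := hg.lower d
    rw [h, one_smul, dist_self] at this
    by_contra hd
    have hd' : (1 : ℝ) ≤ d := by exact_mod_cast Nat.one_le_iff_ne_zero.2 hd
    nlinarith
  have : (Finset.range (a + 1)).card ≤ hfin.toFinset.card := by
    refine Finset.card_le_card_of_injOn (fun i => g ^ i) ?_ ?_
    · intro i hi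
      rw [Set.Finite.coe_toFinset]
      have hi' : i ≤ a := by simpa [Nat.lt_succ_iff] using hi
      have := pow_subset_pow_add hne hsym (2 * i) (a - i) (pow_mem_pow hgU i)
      rwa [← mul_add, Nat.add_sub_cancel' hi'] at this
    · intro i _ j _ h
      rcases le_total i j with hij | hij
      · obtain ⟨d, rfl⟩ := Nat.exists_eq_add_of_le hij
        rw [key i d h, add_zero]
      · obtain ⟨d, rfl⟩ := Nat.exists_eq_add_of_le hij
        rw [key j d h.symm, add_zero]
  rw [Finset.card_range] at this
  omega

/-- The point `(g ^ m * u)⁻¹ • p` is far from the quasi-axis of `g` if `u` is not in the elementary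
closure. -/
lemma far_from_axis (hX : IsDeltaHyperbolic X δ) (hiso : IsometricAction G X)
    (hacy : AcylindricalAction G X δ κ N) (hδ : 0 < δ) (hN : 0 < N) (hLδ : 2000 * δ ≤ L)
    (hLκ : κ ≤ L) {g : G} {p : X} (hg : HasAxis δ L g p) {u : G} (hu : u ∉ elemClosure g)
    (huL : dist (u • p) p ≤ L) (m J : ℕ) :
    m * L - 9 * L - 20 * (N + 1) * L <
      gromov (g ^ J • p) (g⁻¹ ^ J • p) ((g ^ m * u)⁻¹ • p) := by
  have hu' : u⁻¹ ∉ elemClosure g := fun h => hu (by simpa using inv_mem h)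
  have h1 := gromov_lt_of_notMem hX hiso hacy hδ hN hLδ hLκ hg hu' (Or.inl rfl : g = g ∨ g = g⁻¹)
    (Or.inr rfl : g⁻¹ = g ∨ g⁻¹ = g⁻¹) J m
  have h2 := gromov_lt_of_notMem hX hiso hacy hδ hN hLδ hLκ hg hu'
    (Or.inr rfl : g⁻¹ = g ∨ g⁻¹ = g⁻¹) (Or.inr rfl : g⁻¹ = g ∨ g⁻¹ = g⁻¹) J m
  rw [dist_inv_smul_self hiso] at h1 h2
  have e : (g ^ m * u)⁻¹ • p = u⁻¹ • g⁻¹ ^ m • p := by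
    rw [smul_smul, mul_inv_rev, inv_pow]
  rw [e]
  have h3 := (hg.inv hiso).lower m
  have h4 : dist (g⁻¹ ^ m • p) p ≤ dist (u⁻¹ • g⁻¹ ^ m • p) p + L := by
    have t := dist_triangle (u⁻¹ • g⁻¹ ^ m • p) p (u⁻¹ • p)
    rw [dist_smul_iso hiso, dist_comm p, dist_inv_smul_self hiso] at t
    linarith
  have t := dist_triangle_right (g ^ J • p) (g⁻¹ ^ J • p) p
  unfold gromov at h1 h2 ⊢
  linarith

/-- Few elements of `V` have products with `c` in a given coset of the elementary closure. -/
lemma card_coset_le (hX : IsDeltaHyperbolic X δ) (hiso : IsometricAction G X)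
    (hacy : AcylindricalAction G X δ κ N) (hδ : 0 < δ) (hN : 0 < N) (hLδ : 2000 * δ ≤ L)
    (hLκ : κ ≤ L) {g : G} {p : X} (hg : HasAxis δ L g p) {R : ℝ} (c : G)
    (hB : ∀ J : ℕ, R + δ < gromov (g ^ J • p) (g⁻¹ ^ J • p) (c⁻¹ • p)) (V : Finset G)
    (hV : ∀ v ∈ V, ∀ v' ∈ V, (v * c)⁻¹ * (v' * c) ∈ elemClosure g)
    (hR : ∀ v ∈ V, ∀ v' ∈ V, dist ((v⁻¹ * v') • p) p ≤ R) : (V.card : ℝ) ≤ 2 * N := by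
  classical
  rcases V.eq_empty_or_nonempty with rfl | ⟨v₀, hv₀⟩
  · simpa using hN.le
  set P : G → G → Prop := fun b v => ∃ k : ℕ, 0 < k ∧
    ((v₀ * c)⁻¹ * (v * c)) * g ^ k * ((v₀ * c)⁻¹ * (v * c))⁻¹ = b ^ k with hP
  have hcov : V ⊆ V.filter (P g) ∪ V.filter (P g⁻¹) := by
    intro v hv
    rw [Finset.mem_union, Finset.mem_filter, Finset.mem_filter]
    obtain ⟨k, hk, h | h⟩ := hV v₀ hv₀ v hv
    · exact Or.inl ⟨hv, k, hk, h⟩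
    · exact Or.inr ⟨hv, k, hk, by rw [h, inv_pow]⟩
  have hb : ∀ b : G, ((V.filter (P b)).card : ℝ) ≤ N := fun b =>
    card_le_of_conj hX hiso hacy hδ hN hLδ hLκ hg c (v₀ * c) b hB _
      (fun v hv => (Finset.mem_filter.1 hv).2)
      (fun v hv v' hv' => hR v (Finset.mem_filter.1 hv).1 v' (Finset.mem_filter.1 hv').1)
  have h1 : (V.card : ℝ) ≤ (V.filter (P g)).card + (V.filter (P g⁻¹)).card := by
    exact_mod_cast (Finset.card_le_card hcov).trans (Finset.card_union_le _ _)
  linarith [hb g, hb g⁻¹]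

/-- The reduced set: conjugates of `g ^ (1000 * n)` by elements `v * c`, with `c = g ^ (5 * n) * u`
and `v` ranging over representatives of `U ^ n` modulo the elementary closure of `g`. -/
lemma exists_reduced (hX : IsDeltaHyperbolic X δ) (hiso : IsometricAction G X)
    (hacy : AcylindricalAction G X δ κ N) (hδ : 0 < δ) (hN : 0 < N) {U : Set G} (hU : U.Finite)
    (hne : U.Nonempty) (hsym : U⁻¹ = U) {p : X} (hLδ : 2000 * δ ≤ energyAt U p)
    (hLκ : κ ≤ energyAt U p) {g : G} (hg : HasAxis δ (energyAt U p) g p) (hgU : g ∈ U ^ 2)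
    (hvc : ¬ VirtuallyCyclic (Subgroup.closure U)) {a : ℕ} (ha : 10 ^ 6 * (N + 1) ≤ a) :
    ∃ S : Set G, S ⊆ U ^ (10 ^ 7 * (2 * a)) ∧ ReducedAt δ (200 * δ) S p ∧
      ((U ^ (2 * a)).ncard : ℝ) ≤ 2 * N * S.ncard := by
  classical
  set L := energyAt U p with hLdef
  have hL : 0 < L := by linarith
  set n := 2 * a with hn
  have hnN : 2 * 10 ^ 6 * (N + 1) ≤ (n : ℝ) := by rw [hn]; push_cast; linarith
  have hn1 : (1 : ℝ) ≤ n := by linarith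
  have hnL : 2 * 10 ^ 6 * ((N + 1) * L) ≤ n * L := by
    have := mul_le_mul_of_nonneg_right hnN hL.le; linarith
  have hNL : L ≤ (N + 1) * L := by nlinarith
  have hgcl : g ∈ Subgroup.closure U := by
    rw [pow_two] at hgU
    obtain ⟨x, hx, y, hy, rfl⟩ := hgU
    exact mul_mem (Subgroup.subset_closure hx) (Subgroup.subset_closure hy)
  obtain ⟨u, hu, huE⟩ := exists_notMem_elemClosure hX hiso hacy hδ hLδ hLκ hg hU hgcl hvc
  have huL : dist (u • p) p ≤ L := dist_le_energyAt hU p hu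
  set c := g ^ (5 * n) * u with hc
  have hcU : c ∈ U ^ (2 * (5 * n) + 1) := mul_mem_pow (pow_mem_pow hgU _) (by rwa [pow_one])
  have hB : ∀ J : ℕ, 2 * (n * L) + δ < gromov (g ^ J • p) (g⁻¹ ^ J • p) (c⁻¹ • p) := by
    intro J
    have := far_from_axis hX hiso hacy hδ hN hLδ hLκ hg huE huL (5 * n) J
    push_cast at this
    linarith
  have hfin : (U ^ n).Finite := finite_pow hU n
  set V := hfin.toFinset with hVdef
  have hV : ∀ v ∈ V, v ∈ U ^ n := fun v hv => hfin.mem_toFinset.1 hv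
  have hdV : ∀ v ∈ V, dist (v • p) p ≤ n * L := fun v hv => dist_le_of_mem_pow hiso hU p n v (hV v hv)
  set q : G → G ⧸ elemClosure g := fun v => ((v * c : G) : G ⧸ elemClosure g) with hq
  obtain ⟨V', hV'V, hinj, himg⟩ : ∃ V' ⊆ (V : Set G), Set.InjOn q V' ∧ q '' V' = q '' V :=
    (Set.surjOn_image q (V : Set G)).exists_subset_injOn_image_eq
  have hD : ∀ x ∈ (fun v => v * c) '' V', dist (x • p) p ≤ 12 * (n * L) := by
    rintro _ ⟨v, hv, rfl⟩
    have h1 := dist_mul_smul_le hiso v c p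
    have h2 := hdV v (hV'V hv)
    have h3 := dist_le_of_mem_pow hiso hU p _ c hcU
    push_cast at h3
    have h4 : L ≤ n * L := by nlinarith
    simp only
    linarith
  have hY : ∀ x ∈ (fun v => v * c) '' V', ∀ x' ∈ (fun v => v * c) '' V', x ≠ x' →
      x⁻¹ * x' ∉ elemClosure g := by
    rintro _ ⟨v, hv, rfl⟩ _ ⟨v', hv', rfl⟩ hne' hmem
    have : q v = q v' := QuotientGroup.eq.2 hmem
    exact hne' (by simp only [hinj hv hv' this])
  obtain ⟨hwinj, hred⟩ := reduced_conjugates hX hiso hacy hδ hN hLδ hLκ hg (D := 12 * (n * L))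
    (M := 1000 * n) _ hD hY (by push_cast; linarith)
  refine ⟨_, ?_, hred, ?_⟩
  · rintro _ ⟨_, ⟨v, hv, rfl⟩, rfl⟩
    have hx := mul_mem_pow (hV v (hV'V hv)) hcU
    have hw := mul_mem_pow (mul_mem_pow hx (pow_mem_pow hgU (1000 * n))) (inv_mem_pow hsym hx)
    obtain ⟨j, hj⟩ : ∃ j, n + (2 * (5 * n) + 1) + 2 * (1000 * n) + (n + (2 * (5 * n) + 1)) + 2 * j =
        10 ^ 7 * n := by
      have ha1 : 1 ≤ a := by
        have : (1 : ℝ) ≤ a := by linarith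
        exact_mod_cast this
      exact ⟨10 ^ 7 * a - 1011 * n - 1, by omega⟩
    rw [← hj]
    exact pow_subset_pow_add hne hsym _ j hw
  · rw [Set.InjOn.ncard_image hwinj, Set.ncard_image_of_injective _ (mul_left_injective c)]
    have h1 : V'.ncard = (V.image q).card := by
      rw [← Set.InjOn.ncard_image hinj, himg, ← Finset.coe_image, Set.ncard_coe_finset]
    have h2 := Finset.card_le_mul_card_image (f := q) V ⌊2 * N⌋₊ (by
      intro b _
      refine Nat.le_floor ?_
      refine card_coset_le hX hiso hacy hδ hN hLδ hLκ hg c hB _ ?_ ?_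
      · intro v hv v' hv'
        have e : q v = q v' := (Finset.mem_filter.1 hv).2.trans (Finset.mem_filter.1 hv').2.symm
        exact QuotientGroup.eq.1 e
      · intro v hv v' hv'
        have h1 := dist_mul_smul_le hiso v⁻¹ v' p
        rw [dist_inv_smul_self hiso] at h1
        linarith [hdV v (Finset.mem_filter.1 hv).1, hdV v' (Finset.mem_filter.1 hv').1])
    rw [Set.ncard_eq_toFinset_card _ hfin, h1]
    have h3 : (V.card : ℝ) ≤ ⌊2 * N⌋₊ * (V.image q).card := by exact_mod_cast h2
    refine h3.trans ?_
    gcongr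
    exact Nat.floor_le (by positivity)

end Main

/-- ping-pong in powers of `U`, the case of large energy. -/
theorem pingpong_large_energy :
    ∀ N : ℝ, 0 < N →
    ∃ n : ℕ, (10 ^ 6 * (N + 1)) ^ 3 < (n : ℝ) ∧
      ∀ (G : Type u) [Group G] (X : Type v) [MetricSpace X] [MulAction G X],
      ∀ δ κ : ℝ, 0 < δ → δ ≤ κ →
        IsDeltaHyperbolic X δ → IsGeodesicSpace X →
        IsometricAction G X → AcylindricalAction G X δ κ N →
        ∀ U : Set G, U.Finite → U⁻¹ = U →
          2 * 10 ^ 3 * κ < energy X U →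
          (∃ x : X, ¬ Bornology.IsBounded
            ((fun g : G => g • x) '' ↑(Subgroup.closure U))) →
          ¬ VirtuallyCyclic (Subgroup.closure U) →
          ∃ (S : Set G) (p : X),
            S ⊆ U ^ (10 ^ 7 * n) ∧
            ReducedAt δ (200 * δ) S p ∧
            ((U ^ n).ncard : ℝ) / (10 ^ 6 * (N + 1)) ^ 2 ≤ (S.ncard : ℝ) ∧
            energyAt S p ≤ energyAt (U ^ (10 ^ 7 * n)) p ∧
            energyAt (U ^ (10 ^ 7 * n)) p ≤ 10 ^ 12 * (10 ^ 6 * (N + 1)) ^ 3 * energy X U ∧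
            10 ^ 6 * (N + 1) < (S.ncard : ℝ) ∧
            Function.Injective ⇑(FreeGroup.lift (Subtype.val : S → G)) := by
  intro N hN
  set C : ℝ := 10 ^ 6 * (N + 1) with hC
  have hC1 : 10 ^ 6 ≤ C := by rw [hC]; linarith
  have hC3 : C ≤ C ^ 3 := le_self_pow₀ (by linarith) (by norm_num)
  set a := ⌈C ^ 3⌉₊ with ha
  have haC : C ^ 3 ≤ a := Nat.le_ceil _
  have haC' : (a : ℝ) < C ^ 3 + 1 := Nat.ceil_lt_add_one (by positivity)
  refine ⟨2 * a, by push_cast; linarith, ?_⟩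
  intro G _ X _ _ δ κ hδ hκ hX hgeo hiso hacy U hU hsym hE hunb hvc
  obtain ⟨x₀, -⟩ := hunb
  have hne : U.Nonempty := by
    rw [Set.nonempty_iff_ne_empty]
    rintro rfl
    have h1 := energy_le (∅ : Set G) x₀
    have h2 : energyAt (∅ : Set G) x₀ = 0 := by simp [energyAt]
    linarith
  obtain ⟨_, ⟨p, rfl⟩, hp⟩ : ∃ b ∈ Set.range (fun x : X => energyAt U x), b < energy X U + δ :=
    exists_lt_of_csInf_lt ⟨_, x₀, rfl⟩ (by change energy X U < _; linarith)
  simp only at hp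
  have hEp := energy_le U p
  obtain ⟨g, hgU, hg⟩ := exists_hasAxis hX hgeo hiso hδ hU hne hsym p hp.le (by linarith)
  obtain ⟨S, hSU, hred, hcard⟩ := exists_reduced hX hiso hacy hδ hN hU hne hsym (by linarith)
    (by linarith) hg hgU hvc (a := a) (by linarith)
  have hlt : (a : ℝ) < (U ^ (2 * a)).ncard := by
    exact_mod_cast lt_ncard_pow hU hne hsym (by linarith) hg hgU a
  have hcard2 : ((U ^ (2 * a)).ncard : ℝ) / C ^ 2 ≤ (S.ncard : ℝ) := by
    rw [div_le_iff₀ (by positivity)]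
    have h1 : 2 * N ≤ C ^ 2 := by nlinarith
    have h2 := mul_le_mul_of_nonneg_right h1 (Nat.cast_nonneg (α := ℝ) S.ncard)
    linarith
  have hSC : C < (S.ncard : ℝ) := by
    refine lt_of_lt_of_le ?_ hcard2
    rw [lt_div_iff₀ (by positivity)]
    have : C * C ^ 2 = C ^ 3 := by ring
    linarith
  have hSne : S.Nonempty := by
    rw [Set.nonempty_iff_ne_empty]
    rintro rfl
    simp at hSC
    linarith
  refine ⟨S, p, hSU, hred, hcard2, ?_, ?_, hSC, hred.injective hX hiso hδ⟩
  · exact csSup_le_csSup ((finite_pow hU _).image _).bddAbove (hSne.image _) (Set.image_mono hSU)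
  · have h1 : energyAt (U ^ (10 ^ 7 * (2 * a))) p ≤ 10 ^ 7 * (2 * a) * energyAt U p := by
      refine csSup_le ((hSne.mono hSU).image _) ?_
      rintro _ ⟨v, hv, rfl⟩
      have h := dist_le_of_mem_pow hiso hU p _ v hv
      push_cast at h
      exact_mod_cast h
    refine h1.trans ?_
    have hEp0 := energyAt_nonneg U p
    have h2 : energyAt U p ≤ 2 * energy X U := by linarith
    have h3 : (a : ℝ) ≤ 2 * C ^ 3 := by linarith
    have hE0 : 0 < energy X U := by linarith
    calc (10 : ℝ) ^ 7 * (2 * a) * energyAt U p ≤ 10 ^ 7 * (2 * (2 * C ^ 3)) * (2 * energy X U) := by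
          gcongr
      _ = 8 * 10 ^ 7 * (C ^ 3 * energy X U) := by ring
      _ ≤ 10 ^ 12 * (C ^ 3 * energy X U) := by gcongr; norm_num
      _ = 10 ^ 12 * C ^ 3 * energy X U := by ring
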